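/- arXiv:math/9201305 — 4 statements merged into one kernel-verified Lean document; each statement's English description precedes it below -/
import Mathlib

section
/- The number of domino tilings of the Aztec diamond of order n is 2^(n(n+1)/2). -/
/-- The lattice unit square `[a,a+1] × [b,b+1]` with lower-left corner `c = (a,b)`
lies inside the region `{(x,y) : |x|+|y| ≤ n+1}`, i.e. it is a cell of the
Aztec diamond of order `n`. -/
def AztecCell (n : ℕ) (c : ℤ × ℤ) : Prop :=
  max |c.1| |c.1 + 1| + max |c.2| |c.2 + 1| ≤ (n : ℤ) + 1

/-- A domino, encoded by its lower-left cell together with its orientation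
(`true` = horizontal `2×1`, `false` = vertical `1×2`). -/
abbrev Domino := (ℤ × ℤ) × Bool

/-- The two cells covered by a domino. -/
def dominoCells (d : Domino) : Set (ℤ × ℤ) :=
  if d.2 then {d.1, (d.1.1 + 1, d.1.2)} else {d.1, (d.1.1, d.1.2 + 1)}

/-- `T` is a domino tiling of the Aztec diamond of order `n`: every domino of `T`
lies inside the diamond and every cell of the diamond is covered by exactly one
domino of `T`. -/
def IsTiling (n : ℕ) (T : Set Domino) : Prop :=
  (∀ d ∈ T, ∀ c ∈ dominoCells d, AztecCell n c) ∧
  (∀ c, AztecCell n c → ∃! d, d ∈ T ∧ c ∈ dominoCells d)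

/-!
Centre a `2 × 2` block at each of the `(n + 1)²` points `(i + j - n, i - j)`, `0 ≤ i, j ≤ n`. A cell
of the diamond of order `n` lies in two blocks, and any further cell of the diamond of order `n + 1`
lies in one. Every domino of the larger diamond lies in exactly one block, so a tiling of either
diamond amounts to choosing, for each of its cells, the block whose dominoes cover it, and then
tiling inside each block the set of cells chosen there. Replacing the chosen set by its complement
in every block exchanges the choices for the two diamonds. Inside a block the number `w` of tilings
satisfies `2 * w S = 2 ^ (|S| / 2) * w Sᶜ`, so the two counts differ by the factor
`2 ^ (2 * (n + 1) * (n + 2) / 2 - (n + 1) ^ 2) = 2 ^ (n + 1)`.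
-/

namespace AztecDiamond

open Finset Function

section Tilings

variable {ι κ α : Type*}

/-- `T` indexes a tiling of the region `R` by members of the family of tiles `s`, i.e. the sets
`s i` for `i ∈ T` partition `R`. -/
def IsTilingBy (s : ι → Set α) (T : Set ι) (R : Set α) : Prop :=
  T.PairwiseDisjoint s ∧ ⋃ i ∈ T, s i = R

theorem isTilingBy_iff_existsUnique {s : ι → Set α} {T : Set ι} {R : Set α} :
    IsTilingBy s T R ↔ (∀ i ∈ T, ∀ c ∈ s i, c ∈ R) ∧ ∀ c ∈ R, ∃! i, i ∈ T ∧ c ∈ s i := by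
  constructor
  · rintro ⟨hdisj, rfl⟩
    refine ⟨fun i hi c hc => Set.mem_biUnion hi hc, fun c hc => ?_⟩
    obtain ⟨i, hi, hci⟩ := Set.mem_iUnion₂.1 hc
    exact ⟨i, ⟨hi, hci⟩, fun j hj => hdisj.elim_set hj.1 hi c hj.2 hci⟩
  · rintro ⟨hsub, huniq⟩
    refine ⟨Set.pairwiseDisjoint_iff.2 fun i hi j hj ⟨c, hci, hcj⟩ => ?_, ?_⟩
    · exact (huniq c (hsub i hi c hci)).unique ⟨hi, hci⟩ ⟨hj, hcj⟩
    · refine Set.Subset.antisymm (Set.iUnion₂_subset hsub) fun c hc => ?_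
      obtain ⟨i, ⟨hi, hci⟩, -⟩ := huniq c hc
      exact Set.mem_biUnion hi hci

theorem isTilingBy_image {s : ι → Set α} {e : κ → ι} (he : Injective e) {T : Set κ} {R : Set α} :
    IsTilingBy s (e '' T) R ↔ IsTilingBy (s ∘ e) T R := by
  rw [IsTilingBy, IsTilingBy, he.injOn.pairwiseDisjoint_image, Set.biUnion_image]
  rfl

theorem IsTilingBy.subset {s : ι → Set α} {T : Set ι} {R : Set α} (h : IsTilingBy s T R) {i : ι}
    (hi : i ∈ T) : s i ⊆ R :=
  h.2 ▸ Set.subset_biUnion_of_mem hi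

theorem isTilingBy_empty_iff {s : ι → Set α} (hs : ∀ i, (s i).Nonempty) {T : Set ι} :
    IsTilingBy s T ∅ ↔ T = ∅ := by
  constructor
  · intro h
    exact Set.eq_empty_of_forall_notMem fun i hi =>
      (hs i).ne_empty (Set.subset_empty_iff.1 (h.subset hi))
  · rintro rfl
    simp [IsTilingBy]

end Tilings

section Blocks

variable {ι α V L M : Type*} [DecidableEq M]

instance decidablePairwiseDisjoint [DecidableEq L] (u : Finset L) (p : L → Finset M) :
    Decidable ((u : Set L).PairwiseDisjoint p) :=
  decidable_of_iff _ supIndep_iff_pairwiseDisjoint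

/-- The tilings of the finite region `S` by members of the finite family of finite tiles `p`. -/
def finsetTilings [Fintype L] [DecidableEq L] (p : L → Finset M) (S : Finset M) :
    Finset (Finset L) :=
  {u | (u : Set L).PairwiseDisjoint p ∧ u.biUnion p = S}

variable [Fintype V] {cell : V → M → α}

/-- Overlapping blocks, indexed by `V`, have the cell `cell v m` at position `m` of block `v`. The
positions `C v` chosen in each block `v` assign every cell of `R`, and no other cell, to exactly one
block. -/
def IsAssignment (cell : V → M → α) (C : V → Finset M) (R : Set α) : Prop :=
  Set.BijOn (Sigma.uncurry cell) (univ.sigma C : Finset (Σ _ : V, M)) R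

theorem isTilingBy_sigma_iff (hcell : ∀ v, Injective (cell v)) (p : L → Finset M)
    (t : V → Finset L) (R : Set α) :
    IsTilingBy (fun x : Σ _ : V, L => cell x.1 '' p x.2) (univ.sigma t) R ↔
      (∀ v, (t v : Set L).PairwiseDisjoint p) ∧
        IsAssignment cell (fun v => (t v).biUnion p) R := by
  have hunion : ⋃ x ∈ ((univ.sigma t : Finset (Σ _ : V, L)) : Set (Σ _ : V, L)),
      cell x.1 '' (p x.2 : Set M) =
      Sigma.uncurry cell '' (univ.sigma fun v => (t v).biUnion p : Finset (Σ _ : V, M)) := by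
    ext c
    simp only [Set.mem_iUnion, Set.mem_image, mem_coe, mem_sigma, mem_univ, true_and, mem_biUnion,
      Sigma.exists, Sigma.uncurry, exists_prop]
    grind
  rw [IsTilingBy, hunion]
  constructor
  · rintro ⟨hdisj, himage⟩
    have hsame : ∀ v v' l l' m m', l ∈ t v → l' ∈ t v' → m ∈ p l → m' ∈ p l' →
        cell v m = cell v' m' → (⟨v, l⟩ : Σ _ : V, L) = ⟨v', l'⟩ :=
      fun v v' l l' m m' hl hl' hm hm' h =>
        hdisj.elim_set (by simpa using hl) (by simpa using hl') (cell v m) ⟨m, hm, rfl⟩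
          ⟨m', hm', h.symm⟩
    refine ⟨fun v l hl l' hl' hne => disjoint_left.2 fun m hm hm' => hne ?_, ?_⟩
    · simpa using hsame v v l l' m m hl hl' hm hm' rfl
    · refine himage ▸ Set.InjOn.bijOn_image ?_
      rintro ⟨v, m⟩ hm ⟨v', m'⟩ hm' h
      simp only [coe_sigma, Set.mem_sigma_iff, mem_coe, mem_biUnion] at hm hm'
      obtain ⟨-, l, hl, hm⟩ := hm
      obtain ⟨-, l', hl', hm'⟩ := hm'
      obtain ⟨rfl, -⟩ := Sigma.mk.inj_iff.1 (hsame v v' l l' m m' hl hl' hm hm' h)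
      exact congrArg (Sigma.mk v) (hcell v h)
  · rintro ⟨hdisj, hbij⟩
    refine ⟨Set.pairwiseDisjoint_iff.2 ?_, hbij.image_eq⟩
    rintro ⟨v, l⟩ hl ⟨v', l'⟩ hl' ⟨_, ⟨m, hm, rfl⟩, ⟨m', hm', h⟩⟩
    simp only [coe_sigma, Set.mem_sigma_iff, mem_coe] at hl hl' hm hm'
    have hflag : (⟨v', m'⟩ : Σ _ : V, M) = ⟨v, m⟩ :=
      hbij.injOn (by simpa using ⟨l', hl'.2, hm'⟩) (by simpa using ⟨l, hl.2, hm⟩) h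
    obtain ⟨rfl, hm_eq⟩ := Sigma.mk.inj_iff.1 hflag
    obtain rfl := eq_of_heq hm_eq
    rw [(hdisj v').elim_finset hl.2 hl'.2 m' hm hm']

variable [Fintype L]

open Classical in
theorem card_isTilingBy_eq_card_sigma {s : ι → Set α} {R : Set α} {tile : (Σ _ : V, L) → ι}
    (htile : Injective tile) (hR : ∀ i, s i ⊆ R → i ∈ Set.range tile) :
    Nat.card {T : Set ι // IsTilingBy s T R} =
      #{t : V → Finset L | IsTilingBy (s ∘ tile) (univ.sigma t) R} := by
  rw [← Fintype.card_subtype, ← Nat.card_eq_fintype_card]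
  symm
  refine Nat.card_eq_of_bijective
    (fun t => ⟨tile '' (univ.sigma t.1 : Finset _), (isTilingBy_image htile).2 t.2⟩) ⟨?_, ?_⟩
  · intro t t' h
    have hsigma := coe_injective (htile.image_injective (Subtype.ext_iff.1 h))
    ext v l
    simpa using congrArg (⟨v, l⟩ ∈ ·) hsigma
  · rintro ⟨T, hT⟩
    have hpreimage : ((univ.sigma fun v => {l | tile ⟨v, l⟩ ∈ T} : Finset (Σ _ : V, L)) : Set _) =
        tile ⁻¹' T := by
      ext
      simp
    have himage : tile '' (univ.sigma fun v => {l | tile ⟨v, l⟩ ∈ T} : Finset _) = T := by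
      rw [hpreimage, Set.image_preimage_eq_iff]
      exact fun i hi => hR i (hT.subset hi)
    exact ⟨⟨_, (isTilingBy_image htile).1 (himage.symm ▸ hT)⟩, Subtype.ext himage⟩

open Classical in
theorem card_isTilingBy_eq_sum_prod [DecidableEq V] [DecidableEq L] [Fintype M]
    (hcell : ∀ v, Injective (cell v))
    {p : L → Finset M} {s : ι → Set α} {R : Set α} {tile : (Σ _ : V, L) → ι}
    (htile : Injective tile) (hs : ∀ v l, s (tile ⟨v, l⟩) = cell v '' p l)
    (hR : ∀ i, s i ⊆ R → i ∈ Set.range tile) :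
    Nat.card {T : Set ι // IsTilingBy s T R} =
      ∑ C : V → Finset M with IsAssignment cell C R,
        ∏ v, #(finsetTilings p (C v)) := by
  have hs' : s ∘ tile = fun x => cell x.1 '' p x.2 := funext fun x => hs x.1 x.2
  simp only [card_isTilingBy_eq_card_sigma htile hR, hs', isTilingBy_sigma_iff hcell]
  rw [card_eq_sum_card_fiberwise (f := fun t v => (t v).biUnion p)
    (t := {C | IsAssignment cell C R}) (fun t ht => by simp_all)]
  refine sum_congr rfl fun C hC => ?_
  rw [← Fintype.card_piFinset]
  congr 1
  ext t
  simp only [mem_filter_univ] at hC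
  simp only [mem_filter, mem_univ, true_and, Fintype.mem_piFinset, finsetTilings, forall_and,
    funext_iff]
  constructor
  · exact fun h => ⟨h.1.1, h.2⟩
  · rintro ⟨hdisj, hunion⟩
    obtain rfl : (fun v => (t v).biUnion p) = C := funext hunion
    exact ⟨⟨hdisj, hC⟩, hunion⟩

end Blocks

section Complement

variable {F α : Type*} [DecidableEq α] {f : F → α} {A B : Set α}

theorem bijOn_iff_card_fiber {C : Finset F} :
    Set.BijOn f C A ↔ ∀ c, #{x ∈ C | f x = c} = A.indicator 1 c := by
  classical
  constructor
  · intro h c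
    by_cases hc : c ∈ A
    · obtain ⟨x, hx, rfl⟩ := h.surjOn hc
      rw [Set.indicator_of_mem hc, Pi.one_apply, card_eq_one]
      refine ⟨x, eq_singleton_iff_unique_mem.2 ⟨by simpa using hx, fun y hy => ?_⟩⟩
      exact h.injOn (mem_filter.1 hy).1 hx (mem_filter.1 hy).2
    · rw [Set.indicator_of_notMem hc, card_eq_zero, filter_eq_empty_iff]
      exact fun x hx hxc => hc (hxc ▸ h.mapsTo hx)
  · intro h
    have hmaps : Set.MapsTo f C A := fun x hx => by
      by_contra hc
      have hempty := h (f x)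
      rw [Set.indicator_of_notMem hc, card_eq_zero, filter_eq_empty_iff] at hempty
      exact hempty hx rfl
    refine ⟨hmaps, fun x hx y hy hxy => ?_, fun c hc => ?_⟩
    · have hone := h (f y)
      rw [Set.indicator_of_mem (hmaps hy), Pi.one_apply] at hone
      exact card_le_one.1 hone.le x (by simpa using ⟨hx, hxy⟩) y (by simpa using hy)
    · have hone := h c
      rw [Set.indicator_of_mem hc, Pi.one_apply] at hone
      obtain ⟨x, hx⟩ := card_pos.1 (hone ▸ one_pos)
      exact ⟨x, by simpa using hx⟩

variable [Fintype F]

theorem bijOn_compl_iff [DecidableEq F]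
    (hf : ∀ c, #{x | f x = c} = A.indicator 1 c + B.indicator 1 c) (C : Finset F) :
    Set.BijOn f (Cᶜ : Finset F) B ↔ Set.BijOn f C A := by
  rw [bijOn_iff_card_fiber, bijOn_iff_card_fiber]
  refine forall_congr' fun c => ?_
  have hsplit : #{x ∈ C | f x = c} + #{x ∈ Cᶜ | f x = c} = #{x | f x = c} := by
    rw [← card_union_of_disjoint (disjoint_filter_filter disjoint_compl_right), ← filter_union,
      union_compl]
  have := hf c
  lia

theorem card_eq_ncard_add_ncard (hf : ∀ c, #{x | f x = c} = A.indicator 1 c + B.indicator 1 c) :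
    Fintype.card F = A.ncard + B.ncard := by
  classical
  have hsurj : Set.SurjOn f (univ : Finset F) A := fun c hc => by
    have hpos : 0 < #{x | f x = c} := by
      rw [hf, Set.indicator_of_mem hc, Pi.one_apply]
      lia
    obtain ⟨x, hx⟩ := card_pos.1 hpos
    exact ⟨x, by simpa using hx⟩
  obtain ⟨C, -, hC⟩ := hsurj.exists_bijOn_subset
  lift C to Finset F using C.toFinite
  rw [← hC.ncard_eq, ← ((bijOn_compl_iff hf C).2 hC).ncard_eq, Set.ncard_coe_finset,
    Set.ncard_coe_finset, card_add_card_compl]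

end Complement

section Square

/-- The four cells of a `2 × 2` block: the column (left to right) and the row (bottom to top). -/
abbrev Corner := Fin 2 × Fin 2

/-- The four dominoes inside a `2 × 2` block: `(i, true)` is the horizontal one in row `i` and
`(i, false)` the vertical one in column `i`. -/
abbrev BlockDomino := Fin 2 × Bool

/-- The lower-left cell of a domino of a `2 × 2` block. -/
def baseCorner (l : BlockDomino) : Corner :=
  if l.2 then (0, l.1) else (l.1, 0)

/-- The two cells covered by a domino of a `2 × 2` block. -/
def cornersOf (l : BlockDomino) : Finset Corner :=
  if l.2 then {(0, l.1), (1, l.1)} else {(l.1, 0), (l.1, 1)}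

-- `2 * w S = 2 ^ (#S / 2) * w Sᶜ` for the number `w` of tilings, squared to avoid halving `#S`.
theorem four_mul_card_finsetTilings_sq (S : Finset Corner) :
    4 * #(finsetTilings cornersOf S) ^ 2 = 2 ^ #S * #(finsetTilings cornersOf Sᶜ) ^ 2 := by
  revert S
  decide

theorem four_pow_mul_prod_card_finsetTilings_sq {V : Type*} [Fintype V] (C : V → Finset Corner) :
    4 ^ Fintype.card V * (∏ v, #(finsetTilings cornersOf (C v))) ^ 2 =
      2 ^ #(univ.sigma C) * (∏ v, #(finsetTilings cornersOf (Cᶜ v))) ^ 2 := by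
  rw [card_sigma, ← prod_pow_eq_pow_sum, ← prod_pow, ← prod_pow, ← prod_mul_distrib,
    Fintype.card, ← prod_const, ← prod_mul_distrib]
  exact prod_congr rfl fun v _ => four_mul_card_finsetTilings_sq (C v)

end Square

section Diamond

variable {n q : ℕ}

/-- The region tiled by the Aztec diamond of order `n`, as a set of cells. -/
def aztecDiamond (n : ℕ) : Set (ℤ × ℤ) :=
  {c | AztecCell n c}

theorem mem_aztecDiamond_iff {a b : ℤ} :
    (a, b) ∈ aztecDiamond n ↔ a + b + 1 ≤ n ∧ a - b ≤ n ∧ b - a ≤ n ∧ -a - b ≤ n + 1 := by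
  simp only [aztecDiamond, AztecCell, Set.mem_ofPred_eq]
  grind

theorem aztecDiamond_zero : aztecDiamond 0 = ∅ := by
  ext ⟨a, b⟩
  simp only [mem_aztecDiamond_iff, Set.mem_empty_iff_false, iff_false]
  lia

theorem aztecDiamond_mono : Monotone aztecDiamond := by
  rintro m n h ⟨a, b⟩ hc
  rw [mem_aztecDiamond_iff] at hc ⊢
  lia

theorem isTiling_iff_isTilingBy {T : Set Domino} :
    IsTiling n T ↔ IsTilingBy dominoCells T (aztecDiamond n) :=
  isTilingBy_iff_existsUnique.symm

theorem dominoCells_nonempty (d : Domino) : (dominoCells d).Nonempty := by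
  refine ⟨d.1, ?_⟩
  unfold dominoCells
  split_ifs <;> simp

theorem card_isTiling_zero : Nat.card {T : Set Domino // IsTiling 0 T} = 1 := by
  simp only [isTiling_iff_isTilingBy, aztecDiamond_zero, isTilingBy_empty_iff dominoCells_nonempty]
  simp

/-- Indices `(i, j)` of the `2 × 2` blocks centred at `(i + j - n, i - j)`. These centres are the
lattice points with `|x| + |y| ≤ n` and `x + y + n` even. -/
abbrev Block (n : ℕ) := Fin (n + 1) × Fin (n + 1)

/-- The cell at corner `e` of the block `v`. -/
def blockCell (v : Block n) (e : Corner) : ℤ × ℤ :=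
  (v.1 + v.2 - n - 1 + e.1, v.1 - v.2 - 1 + e.2)

/-- The domino of the plane at position `x.2` in the block `x.1`. -/
def blockDomino (x : Σ _ : Block n, BlockDomino) : Domino :=
  (blockCell x.1 (baseCorner x.2), x.2.2)

theorem blockCell_injective (v : Block n) : Injective (blockCell v) := by
  rintro ⟨e₁, e₂⟩ ⟨f₁, f₂⟩ h
  simp only [blockCell, Prod.mk.injEq, Fin.ext_iff] at h ⊢
  omega

theorem blockDomino_injective : Injective (blockDomino (n := n)) := by
  rintro ⟨⟨i, j⟩, k, o⟩ ⟨⟨i', j'⟩, k', o'⟩ h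
  simp only [blockDomino, blockCell, baseCorner, Prod.mk.injEq] at h
  obtain ⟨⟨hx, hy⟩, rfl⟩ := h
  have hindices : i = i' ∧ j = j' ∧ k = k' := by
    simp only [Fin.ext_iff]
    cases o <;> simp only [Bool.false_eq_true, if_true, if_false, Fin.val_zero] at hx hy <;> omega
  obtain ⟨rfl, rfl, rfl⟩ := hindices
  rfl

theorem dominoCells_blockDomino (v : Block n) (l : BlockDomino) :
    dominoCells (blockDomino ⟨v, l⟩) = blockCell v '' cornersOf l := by
  obtain ⟨k, o⟩ := l
  cases o <;> simp [dominoCells, blockDomino, cornersOf, baseCorner, Set.image_pair, blockCell]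

theorem blockCell_left_injective (e : Corner) : Injective fun v : Block n => blockCell v e := by
  rintro ⟨i, j⟩ ⟨i', j'⟩ h
  simp only [blockCell, Prod.mk.injEq, Fin.ext_iff] at h ⊢
  omega

-- The right-hand side says that `(a + 1 - e.1, b + 1 - e.2)` is the centre of a block.
theorem exists_blockCell_eq_iff {e : Corner} {a b : ℤ} :
    (∃ v : Block n, blockCell v e = (a, b)) ↔
      (a + b + n - e.1 - e.2) % 2 = 0 ∧
        0 ≤ a + b + n + 2 - e.1 - e.2 ∧ a + b + n + 2 - e.1 - e.2 ≤ 2 * n ∧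
        0 ≤ a - b + n - e.1 + e.2 ∧ a - b + n - e.1 + e.2 ≤ 2 * n := by
  constructor
  · rintro ⟨⟨i, j⟩, h⟩
    simp only [blockCell, Prod.mk.injEq] at h
    omega
  · intro h
    refine ⟨(⟨((a + b + n + 2 - e.1 - e.2) / 2).toNat, by omega⟩,
      ⟨((a - b + n - e.1 + e.2) / 2).toNat, by omega⟩), ?_⟩
    simp only [blockCell, Prod.mk.injEq]
    omega

theorem card_fiber_blockCell_left (e : Corner) (c : ℤ × ℤ) :
    #{v : Block n | blockCell v e = c} =
      (Set.range fun v : Block n => blockCell v e).indicator 1 c :=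
  bijOn_iff_card_fiber.1
    (by simpa using (blockCell_left_injective e).injOn.bijOn_image (s := Set.univ)) c

theorem card_fiber_blockCell (c : ℤ × ℤ) :
    #{x : Σ _ : Block n, Corner | Sigma.uncurry blockCell x = c} =
      (aztecDiamond (n + 1)).indicator 1 c + (aztecDiamond n).indicator 1 c := by
  classical
  obtain ⟨a, b⟩ := c
  have hsum : #{x : Σ _ : Block n, Corner | Sigma.uncurry blockCell x = (a, b)} =
      ∑ e, #{v : Block n | blockCell v e = (a, b)} := by
    simp only [card_filter, Fintype.sum_sigma]
    exact sum_comm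
  simp only [hsum, card_fiber_blockCell_left, Set.indicator_apply, Set.mem_range,
    exists_blockCell_eq_iff, mem_aztecDiamond_iff, Fintype.sum_prod_type, Fin.sum_univ_two,
    Pi.one_apply, Fin.val_zero, Fin.val_one, Nat.cast_zero, Nat.cast_one, Nat.cast_add]
  rcases Int.emod_two_eq_zero_or_one (a + b + n) with h | h <;> split_ifs <;> omega

theorem mem_range_blockDomino {d : Domino} (hd : dominoCells d ⊆ aztecDiamond (n + 1)) :
    d ∈ Set.range (blockDomino (n := n)) := by
  obtain ⟨⟨a, b⟩, o⟩ := d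
  suffices h : ∃ k, ∃ v : Block n, blockCell v (baseCorner (k, o)) = (a, b) by
    obtain ⟨k, v, hv⟩ := h
    exact ⟨⟨v, k, o⟩, Prod.ext hv rfl⟩
  have hcells : ∀ c ∈ dominoCells ((a, b), o), c ∈ aztecDiamond (n + 1) := hd
  simp only [exists_blockCell_eq_iff, Fin.exists_fin_two]
  cases o <;>
    simp only [dominoCells, baseCorner, Bool.false_eq_true, if_true, if_false, Fin.val_zero,
      Fin.val_one, Nat.cast_zero, Nat.cast_one, Set.mem_insert_iff, Set.mem_singleton_iff,
      forall_eq_or_imp, forall_eq, mem_aztecDiamond_iff, Nat.cast_add] at hcells ⊢ <;>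
    omega

open Classical in
theorem card_isTiling_eq_sum_prod (hq : q ≤ n + 1) :
    Nat.card {T : Set Domino // IsTiling q T} =
      ∑ C : Block n → Finset Corner with IsAssignment blockCell C (aztecDiamond q),
        ∏ v, #(finsetTilings cornersOf (C v)) := by
  simp only [isTiling_iff_isTilingBy]
  exact card_isTilingBy_eq_sum_prod blockCell_injective blockDomino_injective
    dominoCells_blockDomino fun d hd =>
      mem_range_blockDomino (hd.trans (aztecDiamond_mono hq))

theorem ncard_aztecDiamond (n : ℕ) : (aztecDiamond n).ncard = 2 * n * (n + 1) := by
  induction n with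
  | zero => simp [aztecDiamond_zero]
  | succ n ih =>
    have hcard := card_eq_ncard_add_ncard (card_fiber_blockCell (n := n))
    simp only [Fintype.card_sigma, Fintype.card_prod, Fintype.card_fin, sum_const, card_univ,
      smul_eq_mul, ih] at hcard
    lia

theorem prod_card_finsetTilings_eq {C : Block n → Finset Corner}
    (hC : IsAssignment blockCell C (aztecDiamond (n + 1))) :
    ∏ v, #(finsetTilings cornersOf (C v)) =
      2 ^ (n + 1) * ∏ v, #(finsetTilings cornersOf (Cᶜ v)) := by
  have hcard : #(univ.sigma C) = 2 * (n + 1) * (n + 2) := by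
    rw [← Set.ncard_coe_finset, hC.ncard_eq, ncard_aztecDiamond]
  have hsq := four_pow_mul_prod_card_finsetTilings_sq C
  rw [hcard, Fintype.card_prod, Fintype.card_fin] at hsq
  refine Nat.pow_left_injective two_ne_zero (Nat.eq_of_mul_eq_mul_left
    (pow_pos four_pos ((n + 1) * (n + 1))) ?_)
  dsimp only
  rw [hsq, mul_pow, ← mul_assoc, ← pow_mul, show 4 = 2 ^ 2 by rfl, ← pow_mul, ← pow_add]
  ring_nf

theorem isAssignment_compl_iff (C : Block n → Finset Corner) :
    IsAssignment blockCell Cᶜ (aztecDiamond n) ↔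
      IsAssignment blockCell C (aztecDiamond (n + 1)) := by
  have hcompl : univ.sigma Cᶜ = (univ.sigma C)ᶜ := by
    ext
    simp
  rw [IsAssignment, IsAssignment, hcompl, bijOn_compl_iff card_fiber_blockCell]

theorem card_isTiling_succ (n : ℕ) :
    Nat.card {T : Set Domino // IsTiling (n + 1) T} =
      2 ^ (n + 1) * Nat.card {T : Set Domino // IsTiling n T} := by
  rw [card_isTiling_eq_sum_prod le_rfl, card_isTiling_eq_sum_prod n.le_succ, mul_sum]
  refine sum_equiv (compl_involutive.toPerm compl) (fun C => ?_) fun C hC => ?_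
  · simpa using (isAssignment_compl_iff C).symm
  · exact prod_card_finsetTilings_eq (by simpa using hC)

end Diamond

end AztecDiamond

/-- The number of domino tilings of the Aztec diamond of order `n` is `2^(n(n+1)/2)`. -/
theorem aztec_diamond_count (n : ℕ) :
    Nat.card {T : Set Domino // IsTiling n T} = 2 ^ (n * (n + 1) / 2) := by
  induction n with
  | zero => exact AztecDiamond.card_isTiling_zero
  | succ n ih =>
    have hexp : (n + 1) * (n + 1 + 1) / 2 = n + 1 + n * (n + 1) / 2 := by lia
    rw [AztecDiamond.card_isTiling_succ, ih, hexp, ← pow_add]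
end

section
/- The number of domino tilings of the Aztec diamond of order n equals the sum over all n×n alternating sign matrices A of 2^{N₊(A)}, where N₊(A) is the number of +1 entries of A. -/
/-- An alternating sign matrix: entries in `{-1,0,1}`, every row and column sums
to `1`, and the nonzero entries in each row and in each column alternate in
sign. -/
def IsASM {n : ℕ} (A : Matrix (Fin n) (Fin n) ℤ) : Prop :=
  (∀ i j, A i j = -1 ∨ A i j = 0 ∨ A i j = 1) ∧
  (∀ i, ∑ j, A i j = 1) ∧
  (∀ j, ∑ i, A i j = 1) ∧
  (∀ i j₁ j₂, j₁ < j₂ → A i j₁ ≠ 0 → A i j₂ ≠ 0 →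
    (∀ k, j₁ < k → k < j₂ → A i k = 0) → A i j₂ = -A i j₁) ∧
  (∀ j i₁ i₂, i₁ < i₂ → A i₁ j ≠ 0 → A i₂ j ≠ 0 →
    (∀ k, i₁ < k → k < i₂ → A k j = 0) → A i₂ j = -A i₁ j)

/-- The number of `+1` entries of a matrix. -/
def Nplus {n : ℕ} (A : Matrix (Fin n) (Fin n) ℤ) : ℕ :=
  (Finset.univ.filter (fun p : Fin n × Fin n => A p.1 p.2 = 1)).card

/-- The number of `-1` entries of a matrix. -/
def Nminus {n : ℕ} (A : Matrix (Fin n) (Fin n) ℤ) : ℕ :=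
  (Finset.univ.filter (fun p : Fin n × Fin n => A p.1 p.2 = -1)).card

/-!
Consider the `n²` squares made of four cells, arranged as the squares of a board rotated by 45°,
that lie in the Aztec diamond of order `n`. Every domino of a tiling lies in exactly one of these
blocks. Counting the dominoes in each block and subtracting one gives an `n × n` matrix. Along a
row or a column of this matrix consecutive blocks share a corner cell, which is covered once, so
the partial sums telescope to the number of dominoes inside the last block that cover its far
corner. Hence they are `0` or `1`, and the total is `1`, which says exactly that the matrix is an
alternating sign matrix.

Conversely, the matrix and its partial sums determine the dominoes of every block, except that the
two dominoes in a block with entry `1` may be both horizontal or both vertical. These choices are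
independent, so an alternating sign matrix `A` comes from `2 ^ Nplus A` tilings.
-/

section AlternatingSigns

variable {n : ℕ} {f : Fin n → ℤ}

/-- The condition that an alternating sign matrix imposes on each of its rows and columns. -/
def IsAlternatingSign (f : Fin n → ℤ) : Prop :=
  (∀ i, f i = -1 ∨ f i = 0 ∨ f i = 1) ∧
  ∑ i, f i = 1 ∧
  ∀ i₁ i₂, i₁ < i₂ → f i₁ ≠ 0 → f i₂ ≠ 0 → (∀ k, i₁ < k → k < i₂ → f k = 0) → f i₂ = -f i₁

theorem isASM_iff {A : Matrix (Fin n) (Fin n) ℤ} :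
    IsASM A ↔ (∀ i, IsAlternatingSign (A i)) ∧ ∀ j, IsAlternatingSign (A.transpose j) := by
  constructor
  · rintro ⟨hent, hrow, hcol, hrow_alt, hcol_alt⟩
    exact ⟨fun i => ⟨hent i, hrow i, hrow_alt i⟩, fun j => ⟨(hent · j), hcol j, hcol_alt j⟩⟩
  · rintro ⟨hrow, hcol⟩
    exact ⟨fun i => (hrow i).1, fun i => (hrow i).2.1, fun j => (hcol j).2.1,
      fun i => (hrow i).2.2, fun j => (hcol j).2.2⟩

theorem partialSum_last {M : Type*} [AddCommMonoid M] (f : Fin n → M) :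
    Fin.partialSum f (Fin.last n) = ∑ i, f i := by
  simp [Fin.partialSum, List.sum_ofFn, List.take_of_length_le]

-- In the induction on `m`, the bound on `S m - S k + f x` says that the next nonzero entry is
-- harmless; after that entry `f m`, the following one is `-f m`, which restores `S m - S k`.
theorem abs_partialSum_sub_le_one (hf : ∀ i, |f i| ≤ 1)
    (halt : ∀ i₁ i₂, i₁ < i₂ → f i₁ ≠ 0 → f i₂ ≠ 0 →
      (∀ k, i₁ < k → k < i₂ → f k = 0) → f i₂ = -f i₁)
    {k m : Fin (n + 1)} (hkm : k ≤ m) : |Fin.partialSum f m - Fin.partialSum f k| ≤ 1 := by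
  suffices h : |Fin.partialSum f m - Fin.partialSum f k| ≤ 1 ∧
      ∀ x : Fin n, m ≤ x.castSucc → f x ≠ 0 → (∀ y : Fin n, m ≤ y.castSucc → y < x → f y = 0) →
        |Fin.partialSum f m - Fin.partialSum f k + f x| ≤ 1 from h.1
  induction m using Fin.induction with
  | zero =>
    obtain rfl : k = 0 := Fin.le_zero_iff.1 hkm
    simp [hf]
  | succ i ih =>
    obtain rfl | hki := hkm.eq_or_lt
    · simp [hf]
    obtain ⟨hbound, hnext⟩ := ih (Fin.le_castSucc_iff.2 hki)
    rw [Fin.partialSum_succ, add_sub_right_comm]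
    by_cases hi : f i = 0
    · rw [hi, add_zero]
      refine ⟨hbound, fun x hix hx hzero => hnext x (by grind) hx fun y hiy hyx => ?_⟩
      obtain rfl | hne := eq_or_ne y i
      · exact hi
      · exact hzero y (by grind) hyx
    · refine ⟨hnext i le_rfl hi (by grind), fun x hix hx hzero => ?_⟩
      have hcancel : f x = -f i := halt i x (by grind) hi hx fun y hiy hyx => hzero y (by grind) hyx
      rwa [hcancel, add_neg_cancel_right]

theorem isAlternatingSign_iff_partialSum :
    IsAlternatingSign f ↔
      (∀ k, Fin.partialSum f k = 0 ∨ Fin.partialSum f k = 1) ∧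
        Fin.partialSum f (Fin.last n) = 1 := by
  unfold IsAlternatingSign
  rw [partialSum_last]
  constructor
  · rintro ⟨hf, hsum, halt⟩
    refine ⟨fun k => ?_, hsum⟩
    have habs : ∀ i, |f i| ≤ 1 := fun i => by grind
    have hleft := abs_partialSum_sub_le_one habs halt (Fin.zero_le k)
    have hright := abs_partialSum_sub_le_one habs halt (Fin.le_last k)
    rw [Fin.partialSum_zero] at hleft
    rw [partialSum_last] at hright
    grind
  · rintro ⟨h01, hsum⟩
    have hstep : ∀ i, f i = Fin.partialSum f i.succ - Fin.partialSum f i.castSucc := fun i => by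
      rw [Fin.partialSum_succ, add_sub_cancel_left]
    refine ⟨fun i => by grind, hsum, fun i₁ i₂ hlt h₁ h₂ hzero => ?_⟩
    have hconst : ∀ k : Fin (n + 1), i₁.succ ≤ k → k ≤ i₂.castSucc →
        Fin.partialSum f k = Fin.partialSum f i₁.succ := by
      intro k
      induction k using Fin.induction with
      | zero => grind
      | succ i ih => grind
    grind [hconst i₂.castSucc]

/-- Think of `lo k` and `up k` as the numbers of dominoes covering the lower and the upper end of
the `k`-th block of a line of blocks. -/
theorem partialSum_add_sub_one {R : Type*} [AddCommGroupWithOne R] {lo up : ℤ → R}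
    (hup : up (-1) = 0) (hcell : ∀ k : Fin n, lo k + up (k - 1) = 1) (k : Fin (n + 1)) :
    Fin.partialSum (fun i : Fin n => lo i + up i - 1) k = up (k - 1) := by
  induction k using Fin.induction with
  | zero => simp [hup]
  | succ i ih =>
    rw [Fin.partialSum_succ, ih, Fin.val_succ]
    push_cast
    rw [add_sub_cancel_right]
    rw [Fin.val_castSucc, ← hcell i]
    abel

theorem isAlternatingSign_add_sub_one {lo up : ℤ → ℤ} (hlo₀ : ∀ k, 0 ≤ lo k) (hup₀ : ∀ k, 0 ≤ up k)
    (hup : up (-1) = 0) (hlo : lo n = 0)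
    (hcell : ∀ k : Fin (n + 1), lo k + up (k - 1) = 1) :
    IsAlternatingSign fun i : Fin n => lo i + up i - 1 := by
  have hsum := partialSum_add_sub_one hup (fun k : Fin n => hcell k.castSucc)
  refine isAlternatingSign_iff_partialSum.2 ⟨fun k => ?_, ?_⟩
  · rw [hsum k]
    have := hcell k
    have := hlo₀ k
    have := hup₀ (k - 1)
    omega
  · simpa [hsum, hlo] using hcell (Fin.last n)

end AlternatingSigns

section Blocks

/-- The four positions of a domino inside a `2 × 2` block of cells. -/
inductive Side
  | south
  | north
  | west
  | east

/-- The domino at side `s` of the block `(i, j)`, the `2 × 2` square of cells with lower-left cell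
`(i + j - n, i - j - 1)`. The blocks `(i, j)` and `(i + 1, j)` share one corner cell, and so do
`(i, j)` and `(i, j + 1)`; hence every cell lies in two blocks, but every domino in only one. The
blocks contained in the Aztec diamond of order `n` are those with `0 ≤ i, j < n`. -/
def blockDomino (n : ℕ) : Side → ℤ → ℤ → Domino
  | .south, i, j => ((i + j - n, i - j - 1), true)
  | .north, i, j => ((i + j - n, i - j), true)
  | .west, i, j => ((i + j - n, i - j - 1), false)
  | .east, i, j => ((i + j - n + 1, i - j - 1), false)

/-- The lower-left cell of the block `(i, j)`, which is also the upper-right cell of the block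
`(i - 1, j)`. -/
def columnCell (n : ℕ) (i j : ℤ) : ℤ × ℤ := (i + j - n, i - j - 1)

/-- The upper-left cell of the block `(i, j)`, which is also the lower-right cell of the block
`(i, j - 1)`. -/
def rowCell (n : ℕ) (i j : ℤ) : ℤ × ℤ := (i + j - n, i - j)

theorem exists_eq_columnCell_or_rowCell (n : ℕ) (c : ℤ × ℤ) :
    (∃ i j, c = columnCell n i j) ∨ ∃ i j, c = rowCell n i j := by
  obtain ⟨x, y⟩ := c
  simp only [columnCell, rowCell, Prod.mk.injEq]
  obtain h | h := Int.even_or_odd' (x + y + n) |>.choose_spec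
  · exact .inr ⟨(x + y + n) / 2, (x - y + n) / 2, by omega, by omega⟩
  · exact .inl ⟨(x + y + n + 1) / 2, (x - y + n - 1) / 2, by omega, by omega⟩

theorem aztecCell_columnCell_iff {n : ℕ} {i j : ℤ} :
    AztecCell n (columnCell n i j) ↔ (0 ≤ i ∧ i ≤ n) ∧ 0 ≤ j ∧ j < n := by
  simp only [AztecCell, columnCell, abs_eq_max_neg]
  omega

theorem aztecCell_rowCell_iff {n : ℕ} {i j : ℤ} :
    AztecCell n (rowCell n i j) ↔ (0 ≤ i ∧ i < n) ∧ 0 ≤ j ∧ j ≤ n := by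
  simp only [AztecCell, rowCell, abs_eq_max_neg]
  omega

theorem exists_blockDomino_eq (n : ℕ) (d : Domino) : ∃ s i j, blockDomino n s i j = d := by
  obtain ⟨c, _ | _⟩ := d <;>
    obtain ⟨i, j, rfl⟩ | ⟨i, j, rfl⟩ := exists_eq_columnCell_or_rowCell n c
  · exact ⟨.west, i, j, rfl⟩
  · refine ⟨.east, i, j - 1, ?_⟩
    simp only [blockDomino, rowCell, Prod.mk.injEq, and_true]
    omega
  · exact ⟨.south, i, j, rfl⟩
  · exact ⟨.north, i, j, rfl⟩

theorem blockDomino_inj {n : ℕ} {s s' : Side} {i j i' j' : ℤ} :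
    blockDomino n s i j = blockDomino n s' i' j' ↔ s = s' ∧ i = i' ∧ j = j' := by
  cases s <;> cases s' <;> simp [blockDomino] <;> omega

theorem columnCell_mem_dominoCells_iff {n : ℕ} {i j : ℤ} {d : Domino} :
    columnCell n i j ∈ dominoCells d ↔
      d ∈ ({blockDomino n .south i j, blockDomino n .west i j,
        blockDomino n .north (i - 1) j, blockDomino n .east (i - 1) j} : Finset Domino) := by
  obtain ⟨⟨x, y⟩, _ | _⟩ := d <;> simp [dominoCells, columnCell, blockDomino] <;> omega

theorem rowCell_mem_dominoCells_iff {n : ℕ} {i j : ℤ} {d : Domino} :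
    rowCell n i j ∈ dominoCells d ↔
      d ∈ ({blockDomino n .north i j, blockDomino n .west i j,
        blockDomino n .south i (j - 1), blockDomino n .east i (j - 1)} : Finset Domino) := by
  obtain ⟨⟨x, y⟩, _ | _⟩ := d <;> simp [dominoCells, rowCell, blockDomino] <;> omega

theorem dominoCells_blockDomino_subset_iff {n : ℕ} {s : Side} {i j : ℤ} :
    (∀ c ∈ dominoCells (blockDomino n s i j), AztecCell n c) ↔
      (0 ≤ i ∧ i < n) ∧ 0 ≤ j ∧ j < n := by
  cases s <;> simp [dominoCells, blockDomino, AztecCell, abs_eq_max_neg] <;> omega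

end Blocks

section SideCount

theorem existsUnique_mem_and_mem_iff {α : Type*} (T : Set α) (s : Finset α) :
    (∃! a, a ∈ T ∧ a ∈ s) ↔ ∑ a ∈ s, T.indicator (1 : α → ℤ) a = 1 := by
  classical
  simp only [Set.indicator_apply, Pi.one_apply, Finset.sum_boole, Nat.cast_eq_one,
    Finset.card_eq_one, Finset.eq_singleton_iff_unique_mem, Finset.mem_filter, and_comm]
  rfl

/-- The number, `0` or `1`, of dominoes of `T` at side `s` of the block `(i, j)`. -/
noncomputable def sideCount (n : ℕ) (T : Set Domino) (s : Side) (i j : ℤ) : ℤ :=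
  T.indicator 1 (blockDomino n s i j)

variable {n : ℕ} {T : Set Domino}

theorem sideCount_eq_one_iff {s : Side} {i j : ℤ} :
    sideCount n T s i j = 1 ↔ blockDomino n s i j ∈ T := by
  simp [sideCount, Set.indicator_eq_one_iff_mem]

theorem sideCount_eq_zero_iff {s : Side} {i j : ℤ} :
    sideCount n T s i j = 0 ↔ blockDomino n s i j ∉ T := by
  simp [sideCount]

theorem sideCount_eq_zero_or_one (s : Side) (i j : ℤ) :
    sideCount n T s i j = 0 ∨ sideCount n T s i j = 1 := by
  rw [sideCount_eq_zero_iff, sideCount_eq_one_iff]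
  exact (em _).symm

theorem sideCount_nonneg (s : Side) (i j : ℤ) : 0 ≤ sideCount n T s i j := by
  exact Set.indicator_nonneg (fun _ _ => zero_le_one) _

theorem existsUnique_covering_columnCell_iff {i j : ℤ} :
    (∃! d, d ∈ T ∧ columnCell n i j ∈ dominoCells d) ↔
      sideCount n T .south i j + sideCount n T .west i j +
        (sideCount n T .north (i - 1) j + sideCount n T .east (i - 1) j) = 1 := by
  simp only [columnCell_mem_dominoCells_iff, existsUnique_mem_and_mem_iff]
  simp [blockDomino_inj, sideCount, add_assoc]

theorem existsUnique_covering_rowCell_iff {i j : ℤ} :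
    (∃! d, d ∈ T ∧ rowCell n i j ∈ dominoCells d) ↔
      sideCount n T .north i j + sideCount n T .west i j +
        (sideCount n T .south i (j - 1) + sideCount n T .east i (j - 1)) = 1 := by
  simp only [rowCell_mem_dominoCells_iff, existsUnique_mem_and_mem_iff]
  simp [blockDomino_inj, sideCount, add_assoc]

theorem isTiling_iff :
    IsTiling n T ↔
      (∀ s i j, blockDomino n s i j ∈ T → (0 ≤ i ∧ i < n) ∧ 0 ≤ j ∧ j < n) ∧
      (∀ (i : Fin (n + 1)) (j : Fin n), sideCount n T .south i j + sideCount n T .west i j +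
        (sideCount n T .north (i - 1) j + sideCount n T .east (i - 1) j) = 1) ∧
      ∀ (i : Fin n) (j : Fin (n + 1)), sideCount n T .north i j + sideCount n T .west i j +
        (sideCount n T .south i (j - 1) + sideCount n T .east i (j - 1)) = 1 := by
  simp only [← existsUnique_covering_columnCell_iff, ← existsUnique_covering_rowCell_iff]
  constructor
  · rintro ⟨hsub, hcover⟩
    exact ⟨fun s i j hd => dominoCells_blockDomino_subset_iff.1 (hsub _ hd),
      fun i j => hcover _ (aztecCell_columnCell_iff.2 (by omega)),
      fun i j => hcover _ (aztecCell_rowCell_iff.2 (by omega))⟩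
  · rintro ⟨hsub, hcolumn, hrow⟩
    refine ⟨fun d hd => ?_, fun c hc => ?_⟩
    · obtain ⟨s, i, j, rfl⟩ := exists_blockDomino_eq n d
      exact dominoCells_blockDomino_subset_iff.2 (hsub s i j hd)
    · obtain ⟨i, j, rfl⟩ | ⟨i, j, rfl⟩ := exists_eq_columnCell_or_rowCell n c
      · obtain ⟨⟨hi, hin⟩, hj, hjn⟩ := aztecCell_columnCell_iff.1 hc
        lift i to ℕ using hi
        lift j to ℕ using hj
        exact hcolumn ⟨i, by omega⟩ ⟨j, by omega⟩
      · obtain ⟨⟨hi, hin⟩, hj, hjn⟩ := aztecCell_rowCell_iff.1 hc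
        lift i to ℕ using hi
        lift j to ℕ using hj
        exact hrow ⟨i, by omega⟩ ⟨j, by omega⟩

end SideCount

section TilingMatrix

/-- The matrix whose entry at `(i, j)` is one less than the number of dominoes of `T` in the
block `(i, j)`. -/
noncomputable def tilingMatrix (n : ℕ) (T : Set Domino) : Matrix (Fin n) (Fin n) ℤ := fun i j =>
  sideCount n T .south i j + sideCount n T .west i j +
    (sideCount n T .north i j + sideCount n T .east i j) - 1

/-- The set of blocks that `T` covers by two horizontal dominoes. -/
def horizontalBlocks (n : ℕ) (T : Set Domino) : Set (Fin n × Fin n) :=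
  {x | blockDomino n .south x.1 x.2 ∈ T ∧ blockDomino n .north x.1 x.2 ∈ T}

variable {n : ℕ} {T : Set Domino}

theorem tilingMatrix_row (i : Fin n) :
    tilingMatrix n T i = fun j : Fin n =>
      sideCount n T .north i j + sideCount n T .west i j +
        (sideCount n T .south i j + sideCount n T .east i j) - 1 := by
  funext j
  unfold tilingMatrix
  ring

theorem IsTiling.sideCount_eq_zero (hT : IsTiling n T) {i j : ℤ}
    (hij : ¬((0 ≤ i ∧ i < n) ∧ 0 ≤ j ∧ j < n)) (s : Side) : sideCount n T s i j = 0 :=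
  sideCount_eq_zero_iff.2 fun hd => hij ((isTiling_iff.1 hT).1 s i j hd)

theorem IsTiling.partialSum_column (hT : IsTiling n T) (i : Fin (n + 1)) (j : Fin n) :
    Fin.partialSum ((tilingMatrix n T).transpose j) i =
      sideCount n T .north (i - 1) j + sideCount n T .east (i - 1) j :=
  partialSum_add_sub_one (lo := fun i => sideCount n T .south i j + sideCount n T .west i j)
    (up := fun i => sideCount n T .north i j + sideCount n T .east i j)
    (by simp [hT.sideCount_eq_zero]) (fun i => (isTiling_iff.1 hT).2.1 i.castSucc j) i

theorem IsTiling.partialSum_row (hT : IsTiling n T) (i : Fin n) (j : Fin (n + 1)) :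
    Fin.partialSum (tilingMatrix n T i) j =
      sideCount n T .south i (j - 1) + sideCount n T .east i (j - 1) := by
  rw [tilingMatrix_row]
  exact partialSum_add_sub_one (lo := fun j => sideCount n T .north i j + sideCount n T .west i j)
    (up := fun j => sideCount n T .south i j + sideCount n T .east i j)
    (by simp [hT.sideCount_eq_zero]) (fun j => (isTiling_iff.1 hT).2.2 i j.castSucc) j

theorem IsTiling.isASM_tilingMatrix (hT : IsTiling n T) : IsASM (tilingMatrix n T) := by
  obtain ⟨-, hcolumn, hrow⟩ := isTiling_iff.1 hT
  have hnonneg : ∀ s s' i j, 0 ≤ sideCount n T s i j + sideCount n T s' i j := fun s s' i j =>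
    add_nonneg (sideCount_nonneg s i j) (sideCount_nonneg s' i j)
  refine isASM_iff.2 ⟨fun i => ?_, fun j => ?_⟩
  · rw [tilingMatrix_row]
    exact isAlternatingSign_add_sub_one (fun j => hnonneg .north .west i j)
      (fun j => hnonneg .south .east i j) (by simp [hT.sideCount_eq_zero])
      (by simp [hT.sideCount_eq_zero]) (hrow i)
  · exact isAlternatingSign_add_sub_one (fun i => hnonneg .south .west i j)
      (fun i => hnonneg .north .east i j) (by simp [hT.sideCount_eq_zero])
      (by simp [hT.sideCount_eq_zero]) (hcolumn · j)

theorem IsTiling.sideCount_add (hT : IsTiling n T) (i j : Fin n) :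
    sideCount n T .south i j + sideCount n T .west i j =
        1 - Fin.partialSum ((tilingMatrix n T).transpose j) i.castSucc ∧
      sideCount n T .north i j + sideCount n T .west i j =
        1 - Fin.partialSum (tilingMatrix n T i) j.castSucc := by
  obtain ⟨-, hcolumn, hrow⟩ := isTiling_iff.1 hT
  rw [hT.partialSum_column, hT.partialSum_row]
  exact ⟨eq_sub_of_add_eq (hcolumn i.castSucc j), eq_sub_of_add_eq (hrow i j.castSucc)⟩

theorem IsTiling.sideCount_add_le_one (hT : IsTiling n T) (i j : Fin n) :
    sideCount n T .south i j + sideCount n T .west i j ≤ 1 ∧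
      sideCount n T .north i j + sideCount n T .east i j ≤ 1 ∧
      sideCount n T .north i j + sideCount n T .west i j ≤ 1 ∧
      sideCount n T .south i j + sideCount n T .east i j ≤ 1 := by
  obtain ⟨-, hcolumn, hrow⟩ := isTiling_iff.1 hT
  have hnonneg := sideCount_nonneg (n := n) (T := T)
  have hleft := hcolumn i.castSucc j
  have hright := hcolumn i.succ j
  have hupper := hrow i j.castSucc
  have hlower := hrow i j.succ
  simp only [Fin.val_castSucc, Fin.val_succ, Nat.cast_succ, add_sub_cancel_right] at *
  grind

theorem IsTiling.horizontalBlocks_subset (hT : IsTiling n T) :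
    horizontalBlocks n T ⊆ {x | tilingMatrix n T x.1 x.2 = 1} := by
  rintro ⟨i, j⟩ ⟨hsouth, hnorth⟩
  obtain ⟨hwest, heast, -⟩ := hT.sideCount_add_le_one i j
  have hwest₀ := sideCount_nonneg (n := n) (T := T) .west i j
  have heast₀ := sideCount_nonneg (n := n) (T := T) .east i j
  simp only [← sideCount_eq_one_iff] at hsouth hnorth
  simp only [Set.mem_ofPred_eq, tilingMatrix]
  omega

end TilingMatrix

section TilingOfASM

/-- Whether the tiling constructed from the alternating sign matrix `A` and the set `X` of blocks
has a domino at side `s` of the block `(i, j)`. If `A i j = 1` the block holds two dominoes, which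
are horizontal when `(i, j) ∈ X`; if `A i j = 0` it holds one, determined by the sums of the entries
of `A` preceding `A i j` in its column and in its row; if `A i j = -1` it holds none. -/
def HasDomino {n : ℕ} (A : Matrix (Fin n) (Fin n) ℤ) (X : Set (Fin n × Fin n)) (i j : Fin n) :
    Side → Prop :=
  let columnSum := Fin.partialSum (A.transpose j) i.castSucc
  let rowSum := Fin.partialSum (A i) j.castSucc
  fun
  | .south => (i, j) ∈ X ∨ A i j = 0 ∧ columnSum = 0 ∧ rowSum = 1
  | .north => (i, j) ∈ X ∨ A i j = 0 ∧ columnSum = 1 ∧ rowSum = 0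
  | .west => A i j = 1 ∧ (i, j) ∉ X ∨ A i j = 0 ∧ columnSum = 0 ∧ rowSum = 0
  | .east => A i j = 1 ∧ (i, j) ∉ X ∨ A i j = 0 ∧ columnSum = 1 ∧ rowSum = 1

/-- The tiling constructed from the alternating sign matrix `A` whose horizontally covered blocks
are those in `X`. -/
def tilingOfASM {n : ℕ} (A : Matrix (Fin n) (Fin n) ℤ) (X : Set (Fin n × Fin n)) : Set Domino :=
  {d | ∃ s i j, HasDomino A X i j s ∧ blockDomino n s (i : ℕ) (j : ℕ) = d}

variable {n : ℕ} {T : Set Domino} {A : Matrix (Fin n) (Fin n) ℤ} {X : Set (Fin n × Fin n)}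

theorem IsASM.partialSum_column (hA : IsASM A) (j : Fin n) :
    (∀ i, Fin.partialSum (A.transpose j) i = 0 ∨ Fin.partialSum (A.transpose j) i = 1) ∧
      Fin.partialSum (A.transpose j) (Fin.last n) = 1 :=
  isAlternatingSign_iff_partialSum.1 ((isASM_iff.1 hA).2 j)

theorem IsASM.partialSum_row (hA : IsASM A) (i : Fin n) :
    (∀ j, Fin.partialSum (A i) j = 0 ∨ Fin.partialSum (A i) j = 1) ∧
      Fin.partialSum (A i) (Fin.last n) = 1 :=
  isAlternatingSign_iff_partialSum.1 ((isASM_iff.1 hA).1 i)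

theorem blockDomino_mem_tilingOfASM_iff {s : Side} {i j : Fin n} :
    blockDomino n s i j ∈ tilingOfASM A X ↔ HasDomino A X i j s := by
  simp [tilingOfASM, blockDomino_inj, Fin.val_inj]

theorem bounds_of_blockDomino_mem_tilingOfASM {s : Side} {i j : ℤ}
    (hd : blockDomino n s i j ∈ tilingOfASM A X) : (0 ≤ i ∧ i < n) ∧ 0 ≤ j ∧ j < n := by
  obtain ⟨s', a, b, -, hab⟩ := hd
  obtain ⟨-, rfl, rfl⟩ := blockDomino_inj.1 hab
  omega

open Classical in
theorem sideCount_tilingOfASM (s : Side) (i j : Fin n) :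
    sideCount n (tilingOfASM A X) s i j = if HasDomino A X i j s then 1 else 0 := by
  simp only [sideCount, Set.indicator_apply, blockDomino_mem_tilingOfASM_iff, Pi.one_apply]

theorem sideCount_tilingOfASM_eq_zero {i j : ℤ} (hij : ¬((0 ≤ i ∧ i < n) ∧ 0 ≤ j ∧ j < n))
    (s : Side) : sideCount n (tilingOfASM A X) s i j = 0 :=
  sideCount_eq_zero_iff.2 fun hd => hij (bounds_of_blockDomino_mem_tilingOfASM hd)

theorem IsASM.sideCount_tilingOfASM_add (hA : IsASM A) (hX : X ⊆ {x | A x.1 x.2 = 1})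
    (i j : Fin n) :
    sideCount n (tilingOfASM A X) .south i j + sideCount n (tilingOfASM A X) .west i j =
        1 - Fin.partialSum (A.transpose j) i.castSucc ∧
      sideCount n (tilingOfASM A X) .north i j + sideCount n (tilingOfASM A X) .east i j =
        Fin.partialSum (A.transpose j) i.succ ∧
      sideCount n (tilingOfASM A X) .north i j + sideCount n (tilingOfASM A X) .west i j =
        1 - Fin.partialSum (A i) j.castSucc ∧
      sideCount n (tilingOfASM A X) .south i j + sideCount n (tilingOfASM A X) .east i j =
        Fin.partialSum (A i) j.succ := by
  have hcolumn := (hA.partialSum_column j).1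
  have hrow := (hA.partialSum_row i).1
  have hp := hcolumn i.castSucc
  have hp' := hcolumn i.succ
  have hq := hrow j.castSucc
  have hq' := hrow j.succ
  have hXij : (i, j) ∈ X → A i j = 1 := fun h => hX h
  simp only [Fin.partialSum_succ, Matrix.transpose_apply] at hp' hq' ⊢
  simp only [sideCount_tilingOfASM, HasDomino]
  obtain h | h | h := hA.1 i j <;> obtain hp | hp := hp <;> obtain hq | hq := hq <;>
    by_cases hx : (i, j) ∈ X <;> simp_all

theorem IsASM.isTiling_tilingOfASM (hA : IsASM A) (hX : X ⊆ {x | A x.1 x.2 = 1}) :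
    IsTiling n (tilingOfASM A X) := by
  refine isTiling_iff.2 ⟨fun s i j => bounds_of_blockDomino_mem_tilingOfASM, fun i j => ?_,
    fun i j => ?_⟩
  · have hlower : sideCount n (tilingOfASM A X) .south i j +
        sideCount n (tilingOfASM A X) .west i j = 1 - Fin.partialSum (A.transpose j) i := by
      cases i using Fin.lastCases with
      | last => simp [sideCount_tilingOfASM_eq_zero, (hA.partialSum_column j).2]
      | cast i => exact (hA.sideCount_tilingOfASM_add hX i j).1
    have hupper : sideCount n (tilingOfASM A X) .north (i - 1) j +
        sideCount n (tilingOfASM A X) .east (i - 1) j = Fin.partialSum (A.transpose j) i := by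
      cases i using Fin.cases with
      | zero => simp [sideCount_tilingOfASM_eq_zero]
      | succ i => simpa using (hA.sideCount_tilingOfASM_add hX i j).2.1
    rw [hlower, hupper, sub_add_cancel]
  · have hleft : sideCount n (tilingOfASM A X) .north i j +
        sideCount n (tilingOfASM A X) .west i j = 1 - Fin.partialSum (A i) j := by
      cases j using Fin.lastCases with
      | last => simp [sideCount_tilingOfASM_eq_zero, (hA.partialSum_row i).2]
      | cast j => exact (hA.sideCount_tilingOfASM_add hX i j).2.2.1
    have hright : sideCount n (tilingOfASM A X) .south i (j - 1) +
        sideCount n (tilingOfASM A X) .east i (j - 1) = Fin.partialSum (A i) j := by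
      cases j using Fin.cases with
      | zero => simp [sideCount_tilingOfASM_eq_zero]
      | succ j => simpa using (hA.sideCount_tilingOfASM_add hX i j).2.2.2
    rw [hleft, hright, sub_add_cancel]

theorem IsASM.tilingMatrix_tilingOfASM (hA : IsASM A) (hX : X ⊆ {x | A x.1 x.2 = 1}) :
    tilingMatrix n (tilingOfASM A X) = A := by
  ext i j
  obtain ⟨hlower, hupper, -⟩ := hA.sideCount_tilingOfASM_add hX i j
  rw [tilingMatrix, hlower, hupper, Fin.partialSum_succ, Matrix.transpose_apply]
  ring

theorem horizontalBlocks_tilingOfASM : horizontalBlocks n (tilingOfASM A X) = X := by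
  ext ⟨i, j⟩
  simp only [horizontalBlocks, Set.mem_ofPred_eq, blockDomino_mem_tilingOfASM_iff, HasDomino]
  grind

theorem IsTiling.hasDomino_iff (hT : IsTiling n T) (i j : Fin n) (s : Side) :
    HasDomino (tilingMatrix n T) (horizontalBlocks n T) i j s ↔ blockDomino n s i j ∈ T := by
  obtain ⟨hcolumn, hrow⟩ := hT.sideCount_add i j
  obtain ⟨hleft, hright, hupper, hlower⟩ := hT.sideCount_add_le_one i j
  have hA : tilingMatrix n T i j = sideCount n T .south i j + sideCount n T .west i j +
    (sideCount n T .north i j + sideCount n T .east i j) - 1 := rfl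
  have hX : (i, j) ∈ horizontalBlocks n T ↔
      sideCount n T .south i j = 1 ∧ sideCount n T .north i j = 1 := by
    simp only [sideCount_eq_one_iff]
    rfl
  have hcount := fun s => sideCount_eq_zero_or_one (n := n) (T := T) s i j
  have hsouth := hcount .south
  have hnorth := hcount .north
  have hwest := hcount .west
  have heast := hcount .east
  rw [← sideCount_eq_one_iff]
  cases s <;> simp only [HasDomino, hX] <;> grind

theorem IsTiling.tilingOfASM_tilingMatrix (hT : IsTiling n T) :
    tilingOfASM (tilingMatrix n T) (horizontalBlocks n T) = T := by
  ext d
  obtain ⟨s, i, j, rfl⟩ := exists_blockDomino_eq n d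
  by_cases hij : (0 ≤ i ∧ i < n) ∧ 0 ≤ j ∧ j < n
  · obtain ⟨⟨hi, hin⟩, hj, hjn⟩ := hij
    lift i to ℕ using hi
    lift j to ℕ using hj
    exact (blockDomino_mem_tilingOfASM_iff (i := ⟨i, by omega⟩) (j := ⟨j, by omega⟩)).trans
      (hT.hasDomino_iff _ _ _)
  · exact iff_of_false (hij ∘ bounds_of_blockDomino_mem_tilingOfASM)
      (hij ∘ (isTiling_iff.1 hT).1 s i j)

end TilingOfASM

section Counting

variable {n : ℕ}

instance finite_isASM : Finite {A : Matrix (Fin n) (Fin n) ℤ // IsASM A} := by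
  have hfin : {A : Fin n → Fin n → ℤ | ∀ i j, A i j ∈ Set.Icc (-1) 1}.Finite :=
    Set.Finite.pi' fun _ => Set.Finite.pi' fun _ => Set.finite_Icc (-1) 1
  refine (hfin.subset fun A hA i j => ?_).to_subtype
  obtain h | h | h := hA.1 i j <;> simp [h]

theorem card_powerset_eq_two_pow_Nplus (A : Matrix (Fin n) (Fin n) ℤ) :
    Nat.card (𝒫 {x : Fin n × Fin n | A x.1 x.2 = 1}) = 2 ^ Nplus A := by
  rw [Nat.card_coe_set_eq, Set.ncard_powerset, Nplus, ← Set.ncard_coe_finset]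
  simp

theorem tilingOfASM_bijective (n : ℕ) :
    Function.Bijective
      fun AX : Σ A : {A : Matrix (Fin n) (Fin n) ℤ // IsASM A},
          𝒫 {x : Fin n × Fin n | A.1 x.1 x.2 = 1} =>
        (⟨tilingOfASM AX.1.1 AX.2.1, AX.1.2.isTiling_tilingOfASM AX.2.2⟩ :
          {T : Set Domino // IsTiling n T}) := by
  constructor
  · rintro ⟨⟨A, hA⟩, ⟨X, hX⟩⟩ ⟨⟨A', hA'⟩, ⟨X', hX'⟩⟩ heq
    have htiling : tilingOfASM A X = tilingOfASM A' X' := congrArg Subtype.val heq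
    obtain rfl : A = A' := by
      rw [← hA.tilingMatrix_tilingOfASM hX, htiling, hA'.tilingMatrix_tilingOfASM hX']
    obtain rfl : X = X' := by
      rw [← horizontalBlocks_tilingOfASM (A := A) (X := X), htiling, horizontalBlocks_tilingOfASM]
    rfl
  · rintro ⟨T, hT⟩
    exact ⟨⟨⟨tilingMatrix n T, hT.isASM_tilingMatrix⟩,
      ⟨horizontalBlocks n T, hT.horizontalBlocks_subset⟩⟩, Subtype.ext hT.tilingOfASM_tilingMatrix⟩

end Counting

open Classical in
/-- The number of domino tilings of the Aztec diamond of order `n` equals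
`Σ_A 2^{N₊(A)}`, the sum over all `n×n` alternating sign matrices `A` of `2` to
the number of `+1` entries of `A`. -/
theorem aztec_count_eq_sum_Nplus (n : ℕ) :
    Nat.card {T : Set Domino // IsTiling n T} =
      ∑ᶠ A : Matrix (Fin n) (Fin n) ℤ, (if IsASM A then 2 ^ Nplus A else 0) := by
  have := Fintype.ofFinite {A : Matrix (Fin n) (Fin n) ℤ // IsASM A}
  calc Nat.card {T : Set Domino // IsTiling n T}
      = Nat.card (Σ A : {A : Matrix (Fin n) (Fin n) ℤ // IsASM A},
        𝒫 {x : Fin n × Fin n | A.1 x.1 x.2 = 1}) :=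
        (Nat.card_eq_of_bijective _ (tilingOfASM_bijective n)).symm
    _ = ∑ A : {A : Matrix (Fin n) (Fin n) ℤ // IsASM A}, 2 ^ Nplus A.1 := by
        rw [Nat.card_sigma]
        simp only [card_powerset_eq_two_pow_Nplus]
    _ = ∑ᶠ A : Matrix (Fin n) (Fin n) ℤ, if IsASM A then 2 ^ Nplus A else 0 := by
        simp only [← finsum_eq_if]
        rw [← finsum_subtype_eq_finsum_cond, finsum_eq_sum_of_fintype]
end

section
/- The sum over all n×n alternating sign matrices A of 2^{N₋(A)} equals 2^{n(n−1)/2}, where N₋(A) is the number of −1 entries of A. -/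
/-!
Let `g` and `h` be the corner sums of alternating sign matrices `A` and `B` of orders `n` and
`n + 1`. Call the pair interlacing when `h (i, j)` and `h (i + 1, j + 1) - 1` are at most
`g (i, j)`, which in turn is at most `h (i, j + 1)` and `h (i + 1, j)`. For fixed `h` these
conditions confine each value of `g` separately, to an interval with two elements where `B` has an
entry `-1` and with one element elsewhere, so `B` has `2 ^ Nminus B` partners. In the same way `A`
has `2 ^ Nplus A = 2 ^ (n + Nminus A)` partners. Counting the interlacing pairs in both ways shows
that the sum is multiplied by `2 ^ n` when the order grows from `n` to `n + 1`. (Elkies, Kuperberg,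
Larsen and Propp use this argument, with the pairs as domino tilings of the Aztec diamond.)
-/

open Finset

/-- A sequence with entries in `{-1, 0, 1}` whose nonzero entries alternate in sign: the condition
that `IsASM` puts on each row and each column, apart from the value of the sum. -/
structure IsSignAlternating (a : ℕ → ℤ) : Prop where
  entry (k : ℕ) : a k = -1 ∨ a k = 0 ∨ a k = 1
  alternate (k₁ k₂ : ℕ) : k₁ < k₂ → a k₁ ≠ 0 → a k₂ ≠ 0 →
    (∀ k, k₁ < k → k < k₂ → a k = 0) → a k₂ = -a k₁

namespace IsSignAlternating

variable {a : ℕ → ℤ}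

lemma sum_range_eq_zero_or_eq_last (ha : IsSignAlternating a) (k : ℕ) :
    (∀ l < k, a l = 0) ∨
      ∃ m < k, a m ≠ 0 ∧ (∀ l, m < l → l < k → a l = 0) ∧
        (∑ l ∈ range k, a l = 0 ∨ ∑ l ∈ range k, a l = a m) := by
  induction k with
  | zero => simp
  | succ k ih =>
    rw [sum_range_succ]
    by_cases hk : a k = 0
    · rcases ih with hzero | ⟨m, hmk, hm, hgap, hsum⟩
      · exact .inl fun l hl => (Nat.lt_succ_iff_lt_or_eq.1 hl).elim (hzero l) (· ▸ hk)
      · refine .inr ⟨m, by omega, hm, fun l hml hl => ?_, by simpa only [hk, add_zero]⟩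
        exact (Nat.lt_succ_iff_lt_or_eq.1 hl).elim (hgap l hml) (· ▸ hk)
    · refine .inr ⟨k, by omega, hk, fun l _ _ => by omega, ?_⟩
      rcases ih with hzero | ⟨m, hmk, hm, hgap, hsum⟩
      · exact .inr (by rw [sum_eq_zero fun l hl => hzero l (mem_range.1 hl), zero_add])
      · have hflip := ha.alternate m k hmk hm hk hgap
        omega

lemma abs_sum_range_le_one (ha : IsSignAlternating a) (k : ℕ) : |∑ l ∈ range k, a l| ≤ 1 := by
  rw [abs_le]
  rcases ha.sum_range_eq_zero_or_eq_last k with hzero | ⟨m, -, -, -, hsum⟩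
  · simp [sum_eq_zero fun l hl => hzero l (mem_range.1 hl)]
  · have hm := ha.entry m
    omega

lemma shift (ha : IsSignAlternating a) (m : ℕ) : IsSignAlternating fun k => a (m + k) where
  entry k := ha.entry (m + k)
  alternate k₁ k₂ hlt h₁ h₂ hgap := by
    refine ha.alternate _ _ (by omega) h₁ h₂ fun k hk₁ hk₂ => ?_
    obtain ⟨l, rfl⟩ := Nat.exists_eq_add_of_le (show m ≤ k by omega)
    exact hgap l (by omega) (by omega)

lemma sum_range_nonneg_and_le_one (ha : IsSignAlternating a) {k N : ℕ} (hk : k ≤ N)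
    (hN : ∑ l ∈ range N, a l = 1) : 0 ≤ ∑ l ∈ range k, a l ∧ ∑ l ∈ range k, a l ≤ 1 := by
  obtain ⟨m, rfl⟩ := Nat.exists_eq_add_of_le hk
  rw [sum_range_add] at hN
  -- Head and tail lie in `{-1, 0, 1}` and add up to `1`, so neither of them is `-1`.
  have hhead := abs_le.1 (ha.abs_sum_range_le_one k)
  have htail := abs_le.1 ((ha.shift k).abs_sum_range_le_one m)
  omega

lemma of_sum_range (h : ∀ k, 0 ≤ ∑ l ∈ range k, a l ∧ ∑ l ∈ range k, a l ≤ 1) :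
    IsSignAlternating a where
  entry k := by
    have h₀ := h k
    have h₁ := h (k + 1)
    rw [sum_range_succ] at h₁
    omega
  alternate k₁ k₂ hlt hk₁ hk₂ hgap := by
    have hconst : ∑ l ∈ range k₂, a l = ∑ l ∈ range (k₁ + 1), a l := by
      refine (sum_subset (range_subset_range.2 hlt) fun l hl hl' => ?_).symm
      simp only [mem_range] at hl hl'
      exact hgap l (by omega) hl
    have h₁ := h k₁
    have h₁' := h (k₁ + 1)
    have h₂' := h (k₂ + 1)
    rw [sum_range_succ, hconst] at h₂'
    rw [sum_range_succ] at h₁' h₂'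
    omega

end IsSignAlternating

section Padding

variable {n : ℕ} (A : Matrix (Fin n) (Fin n) ℤ)

/-- The infinite block matrix `diag(A, 1)`. Padding by an identity rather than by zeros puts the
corner sums of matrices of all orders on the one index set `ℕ × ℕ`, where the interlacing conditions
hold without restrictions on the indices. -/
def padded (p : ℕ × ℕ) : ℤ :=
  if h : p.1 < n ∧ p.2 < n then A ⟨p.1, h.1⟩ ⟨p.2, h.2⟩ else if p.1 = p.2 then 1 else 0

lemma padded_val (i j : Fin n) : padded A (i, j) = A i j := by
  simp [padded]

lemma padded_of_le {i j : ℕ} (h : n ≤ i ∨ n ≤ j) : padded A (i, j) = if i = j then 1 else 0 :=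
  dif_neg (by dsimp only; omega)

lemma padded_transpose (i j : ℕ) : padded A.transpose (i, j) = padded A (j, i) := by
  simp only [padded, Matrix.transpose_apply, and_comm, eq_comm]

variable {A}

lemma sum_range_padded (hA : ∀ i, ∑ j, A i j = 1) (i : ℕ) {N : ℕ} (hN : n ≤ N) :
    ∑ j ∈ range N, padded A (i, j) = if i < N then 1 else 0 := by
  rcases lt_or_ge i n with hi | hi
  · rw [if_pos (hi.trans_le hN), ← hA ⟨i, hi⟩]
    calc ∑ j ∈ range N, padded A (i, j) = ∑ j ∈ range n, padded A (i, j) := by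
          refine (sum_subset (range_subset_range.2 hN) fun j _ hj => ?_).symm
          have hj : n ≤ j := by simpa using hj
          rw [padded_of_le A (.inr hj), if_neg (by omega)]
      _ = ∑ j, A ⟨i, hi⟩ j := by
          rw [sum_range]
          exact sum_congr rfl fun j _ => padded_val A ⟨i, hi⟩ j
  · simp only [padded_of_le A (.inl hi), sum_ite_eq, mem_range]

lemma IsASM.transpose (hA : IsASM A) : IsASM A.transpose :=
  ⟨fun i j => hA.1 j i, hA.2.2.1, hA.2.1, hA.2.2.2.2, hA.2.2.2.1⟩

lemma IsASM.isSignAlternating_padded (hA : IsASM A) (i : ℕ) :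
    IsSignAlternating fun j => padded A (i, j) where
  entry j := by
    unfold padded
    split_ifs
    exacts [hA.1 _ _, .inr (.inr rfl), .inr (.inl rfl)]
  alternate j₁ j₂ hlt h₁ h₂ hgap := by
    by_cases hj : i < n ∧ j₂ < n
    · have hj₁ : j₁ < n := hlt.trans hj.2
      have halt := hA.2.2.2.1 ⟨i, hj.1⟩ ⟨j₁, hj₁⟩ ⟨j₂, hj.2⟩ hlt
      simp only [← padded_val] at halt
      exact halt h₁ h₂ fun k => hgap k
    · obtain rfl : i = j₂ := by
        by_contra hne
        exact h₂ (by rw [padded_of_le A (by omega), if_neg hne])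
      exact absurd (by rw [padded_of_le A (by omega), if_neg hlt.ne']) h₁

lemma isASM_of_padded (hrow : ∀ i, IsSignAlternating fun j => padded A (i, j))
    (hcol : ∀ j, IsSignAlternating fun i => padded A (i, j))
    (hrowsum : ∀ i, ∑ j, A i j = 1) (hcolsum : ∀ j, ∑ i, A i j = 1) : IsASM A := by
  refine ⟨fun i j => padded_val A i j ▸ (hrow i).entry j, hrowsum, hcolsum, ?_, ?_⟩
  · intro i j₁ j₂ hlt h₁ h₂ hgap
    simp only [← padded_val] at h₁ h₂ hgap ⊢
    exact (hrow i).alternate j₁ j₂ hlt h₁ h₂ fun k hk hk' => hgap ⟨k, hk'.trans j₂.2⟩ hk hk'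
  · intro j i₁ i₂ hlt h₁ h₂ hgap
    simp only [← padded_val] at h₁ h₂ hgap ⊢
    exact (hcol j).alternate i₁ i₂ hlt h₁ h₂ fun k hk hk' => hgap ⟨k, hk'.trans i₂.2⟩ hk hk'

end Padding

/-- The function `h` is the family of corner sums of a padded alternating sign matrix of order `n`;
see `bijOn_cornerSum`. The prescribed boundary values are the corner sums of an identity matrix. -/
structure IsCornerSum (n : ℕ) (h : ℕ × ℕ → ℤ) : Prop where
  boundary (i j : ℕ) : i = 0 ∨ j = 0 ∨ n ≤ i ∨ n ≤ j → h (i, j) = (min i j : ℕ)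
  row_step (i j : ℕ) : h (i, j) ≤ h (i + 1, j) ∧ h (i + 1, j) ≤ h (i, j) + 1
  col_step (i j : ℕ) : h (i, j) ≤ h (i, j + 1) ∧ h (i, j + 1) ≤ h (i, j) + 1

/-- The mixed second difference of `h`, which recovers a matrix from its corner sums. -/
def mixedDiff (h : ℕ × ℕ → ℤ) (p : ℕ × ℕ) : ℤ :=
  h (p.1 + 1, p.2 + 1) - h (p.1, p.2 + 1) - h (p.1 + 1, p.2) + h (p.1, p.2)

lemma sum_mixedDiff (h : ℕ × ℕ → ℤ) (i j : ℕ) :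
    ∑ k ∈ range i, ∑ l ∈ range j, mixedDiff h (k, l) =
      h (i, j) - h (0, j) - h (i, 0) + h (0, 0) := by
  have hrow (k : ℕ) : ∑ l ∈ range j, mixedDiff h (k, l) =
      (h (k + 1, j) - h (k + 1, 0)) - (h (k, j) - h (k, 0)) := by
    rw [← sum_range_sub (fun l => h (k + 1, l)), ← sum_range_sub (fun l => h (k, l)),
      ← sum_sub_distrib]
    exact sum_congr rfl fun l _ => by rw [mixedDiff]; ring
  simp only [hrow]
  rw [sum_range_sub (fun k => h (k, j) - h (k, 0))]
  ring

section CornerSum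

variable {n : ℕ} (A : Matrix (Fin n) (Fin n) ℤ)

/-- The sum of the entries of the padded matrix in its first `p.1` rows and first `p.2` columns. -/
def cornerSum (p : ℕ × ℕ) : ℤ :=
  ∑ k ∈ range p.1, ∑ l ∈ range p.2, padded A (k, l)

lemma cornerSum_transpose (i j : ℕ) : cornerSum A.transpose (i, j) = cornerSum A (j, i) := by
  simp only [cornerSum, padded_transpose]
  exact sum_comm

lemma cornerSum_succ_row (i j : ℕ) :
    cornerSum A (i + 1, j) = cornerSum A (i, j) + ∑ l ∈ range j, padded A (i, l) :=
  sum_range_succ _ _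

lemma mixedDiff_cornerSum : mixedDiff (cornerSum A) = padded A := by
  ext ⟨i, j⟩
  simp only [mixedDiff, cornerSum_succ_row, sum_range_succ]
  ring

lemma cornerSum_injective : Function.Injective (cornerSum (n := n)) := by
  intro A B hAB
  ext i j
  rw [← padded_val A, ← padded_val B, ← mixedDiff_cornerSum, ← mixedDiff_cornerSum, hAB]

variable {A}

lemma cornerSum_of_le (hA : ∀ i, ∑ j, A i j = 1) (i : ℕ) {j : ℕ} (hj : n ≤ j) :
    cornerSum A (i, j) = (min i j : ℕ) := by
  have hfilter : (range i).filter (· < j) = range (min i j) := by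
    ext k
    simp only [mem_filter, mem_range, lt_min_iff]
  simp only [cornerSum, sum_range_padded hA _ hj, sum_boole, hfilter, card_range]

lemma IsASM.cornerSum_row_step (hA : IsASM A) (i j : ℕ) :
    cornerSum A (i, j) ≤ cornerSum A (i + 1, j) ∧
      cornerSum A (i + 1, j) ≤ cornerSum A (i, j) + 1 := by
  have hsum := sum_range_padded hA.2.1 i (show n ≤ n + (i + 1) + j by omega)
  rw [if_pos (by omega)] at hsum
  have hpartial := (hA.isSignAlternating_padded i).sum_range_nonneg_and_le_one
    (show j ≤ n + (i + 1) + j by omega) hsum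
  rw [cornerSum_succ_row]
  omega

lemma IsASM.isCornerSum (hA : IsASM A) : IsCornerSum n (cornerSum A) where
  boundary i j := by
    rintro (rfl | rfl | hi | hj)
    · simp [cornerSum]
    · simp [cornerSum]
    · rw [← cornerSum_transpose, cornerSum_of_le hA.transpose.2.1 j hi, min_comm]
    · exact cornerSum_of_le hA.2.1 i hj
  row_step := hA.cornerSum_row_step
  col_step i j := by
    simpa only [cornerSum_transpose] using hA.transpose.cornerSum_row_step j i

end CornerSum

namespace IsCornerSum

variable {n : ℕ} {g h : ℕ × ℕ → ℤ} {A : Matrix (Fin n) (Fin n) ℤ}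

lemma isSignAlternating_padded (hA : IsCornerSum n (cornerSum A)) (i : ℕ) :
    IsSignAlternating fun j => padded A (i, j) :=
  .of_sum_range fun j => by
    have hstep := hA.row_step i j
    rw [cornerSum_succ_row] at hstep
    omega

lemma sum_row (hA : IsCornerSum n (cornerSum A)) (i : Fin n) : ∑ j, A i j = 1 := by
  have hstep := cornerSum_succ_row A i n
  rw [hA.boundary _ _ (by omega), hA.boundary _ _ (by omega), sum_range] at hstep
  simp only [padded_val] at hstep
  omega

lemma transpose (hA : IsCornerSum n (cornerSum A)) : IsCornerSum n (cornerSum A.transpose) where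
  boundary i j hij := by
    rw [cornerSum_transpose, hA.boundary j i (by omega), min_comm]
  row_step i j := by
    simpa only [cornerSum_transpose] using hA.col_step j i
  col_step i j := by
    simpa only [cornerSum_transpose] using hA.row_step j i

lemma isASM (hA : IsCornerSum n (cornerSum A)) : IsASM A :=
  isASM_of_padded hA.isSignAlternating_padded
    (fun j => by simpa only [padded_transpose] using hA.transpose.isSignAlternating_padded j)
    hA.sum_row hA.transpose.sum_row

lemma padded_mixedDiff (hh : IsCornerSum n h) :
    padded (Matrix.of fun i j : Fin n => mixedDiff h (i, j)) = mixedDiff h := by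
  ext ⟨i, j⟩
  by_cases hij : i < n ∧ j < n
  · exact padded_val _ ⟨i, hij.1⟩ ⟨j, hij.2⟩
  · rw [padded_of_le _ (by omega), mixedDiff, hh.boundary _ _ (by omega),
      hh.boundary _ _ (by omega), hh.boundary _ _ (by omega), hh.boundary _ _ (by omega)]
    split_ifs <;> omega

lemma cornerSum_mixedDiff (hh : IsCornerSum n h) :
    cornerSum (Matrix.of fun i j : Fin n => mixedDiff h (i, j)) = h := by
  ext ⟨i, j⟩
  simp only [cornerSum, hh.padded_mixedDiff, sum_mixedDiff]
  rw [hh.boundary 0 j (by omega), hh.boundary i 0 (by omega), hh.boundary 0 0 (by omega)]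
  simp

end IsCornerSum

lemma bijOn_cornerSum (n : ℕ) :
    Set.BijOn cornerSum {A : Matrix (Fin n) (Fin n) ℤ | IsASM A} {h | IsCornerSum n h} := by
  refine ⟨fun A hA => IsASM.isCornerSum hA, cornerSum_injective.injOn, fun h hh => ?_⟩
  have hsum := IsCornerSum.cornerSum_mixedDiff hh
  exact ⟨_, IsCornerSum.isASM (hsum.symm ▸ hh), hsum⟩

/-- The compatibility of the corner sums `g` of a matrix of order `n` with the corner sums `h` of a
matrix of order `n + 1`. -/
def Interlaces (g h : ℕ × ℕ → ℤ) : Prop :=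
  ∀ i j, h (i, j) ≤ g (i, j) ∧ h (i + 1, j + 1) ≤ g (i, j) + 1 ∧
    g (i, j) ≤ h (i, j + 1) ∧ g (i, j) ≤ h (i + 1, j)

namespace Interlaces

variable {n : ℕ} {g h : ℕ × ℕ → ℤ}

lemma isCornerSum_left (hgh : Interlaces g h) (hh : IsCornerSum (n + 1) h) : IsCornerSum n g where
  boundary i j hij := by
    have hg := hgh i j
    have h₀₀ := hh.boundary i j
    have h₀₁ := hh.boundary i (j + 1)
    have h₁₀ := hh.boundary (i + 1) j
    have h₁₁ := hh.boundary (i + 1) (j + 1)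
    omega
  row_step i j := by
    have hg := hgh i j
    have hg' := hgh (i + 1) j
    omega
  col_step i j := by
    have hg := hgh i j
    have hg' := hgh i (j + 1)
    omega

lemma isCornerSum_right (hgh : Interlaces g h)
    (hh : ∀ i j, i = 0 ∨ j = 0 ∨ n ≤ i ∨ n ≤ j → h (i, j) = (min i j : ℕ)) : IsCornerSum n h where
  boundary := hh
  row_step i j := by
    refine ⟨(hgh i j).1.trans (hgh i j).2.2.2, ?_⟩
    cases j with
    | zero => simp [hh _ 0]
    | succ j => linarith [(hgh i j).2.1, (hgh i j).2.2.1]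
  col_step i j := by
    refine ⟨(hgh i j).1.trans (hgh i j).2.2.1, ?_⟩
    cases i with
    | zero => simp [hh 0]
    | succ i => linarith [(hgh i j).2.1, (hgh i j).2.2.2]

end Interlaces

lemma ncard_setOf_eqOn_compl_range {κ ι α : Type*} [Fintype κ] {e : κ → ι}
    (he : Function.Injective e) (f₀ : ι → α) (t : κ → Finset α) :
    {f : ι → α | Set.EqOn f f₀ (Set.range e)ᶜ ∧ ∀ k, f (e k) ∈ t k}.ncard = ∏ k, #(t k) := by
  classical
  have himage : {f : ι → α | Set.EqOn f f₀ (Set.range e)ᶜ ∧ ∀ k, f (e k) ∈ t k} =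
      (fun v => Function.extend e v f₀) '' (Fintype.piFinset t : Set (κ → α)) := by
    ext f
    simp only [Set.mem_ofPred_eq, Set.mem_image, mem_coe, Fintype.mem_piFinset]
    constructor
    · rintro ⟨hout, hin⟩
      refine ⟨f ∘ e, hin, funext fun i => ?_⟩
      by_cases hi : i ∈ Set.range e
      · obtain ⟨k, rfl⟩ := hi
        exact he.extend_apply _ _ k
      · rw [Function.extend_apply' _ _ _ hi, hout hi]
    · rintro ⟨v, hv, rfl⟩
      exact ⟨fun i hi => Function.extend_apply' _ _ i hi,
        fun k => (he.extend_apply v f₀ k).symm ▸ hv k⟩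
  rw [himage, Set.ncard_image_of_injective _ (Function.extend_injective he f₀),
    Set.ncard_coe_finset, Fintype.card_piFinset]

section Windows

variable {n : ℕ}

/-- The upper left corner of a cell of the `n × n` board. -/
def topLeft (p : Fin n × Fin n) : ℕ × ℕ := (p.1, p.2)

/-- The lower right corner of a cell of the `n × n` board. -/
def bottomRight (p : Fin n × Fin n) : ℕ × ℕ := (p.1 + 1, p.2 + 1)

lemma topLeft_injective : Function.Injective (topLeft (n := n)) := by
  intro p q hpq
  simpa [topLeft, Prod.ext_iff, Fin.ext_iff] using hpq

lemma bottomRight_injective : Function.Injective (bottomRight (n := n)) := by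
  intro p q hpq
  simpa [bottomRight, Prod.ext_iff, Fin.ext_iff] using hpq

lemma mem_range_topLeft {i j : ℕ} : (i, j) ∈ Set.range (topLeft (n := n)) ↔ i < n ∧ j < n := by
  constructor
  · rintro ⟨p, hp⟩
    simp only [topLeft, Prod.mk.injEq] at hp
    omega
  · exact fun h => ⟨(⟨i, h.1⟩, ⟨j, h.2⟩), rfl⟩

lemma mem_range_bottomRight {i j : ℕ} :
    (i, j) ∈ Set.range (bottomRight (n := n)) ↔ (0 < i ∧ i ≤ n) ∧ 0 < j ∧ j ≤ n := by
  constructor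
  · rintro ⟨p, hp⟩
    simp only [bottomRight, Prod.mk.injEq] at hp
    omega
  · rintro ⟨⟨hi, hin⟩, hj, hjn⟩
    exact ⟨(⟨i - 1, by omega⟩, ⟨j - 1, by omega⟩),
      Prod.ext (Nat.sub_add_cancel hi) (Nat.sub_add_cancel hj)⟩

lemma padded_topLeft (A : Matrix (Fin n) (Fin n) ℤ) (p : Fin n × Fin n) :
    padded A (topLeft p) = A p.1 p.2 :=
  padded_val A p.1 p.2

end Windows

/-- The interval to which `Interlaces g h` confines `g p` when `h` is given. -/
noncomputable def leftIcc (h : ℕ × ℕ → ℤ) (p : ℕ × ℕ) : Finset ℤ :=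
  Icc (max (h (p.1, p.2)) (h (p.1 + 1, p.2 + 1) - 1)) (min (h (p.1, p.2 + 1)) (h (p.1 + 1, p.2)))

/-- The interval to which `Interlaces g h` confines `h (p.1 + 1, p.2 + 1)` when `g` is given. -/
noncomputable def rightIcc (g : ℕ × ℕ → ℤ) (p : ℕ × ℕ) : Finset ℤ :=
  Icc (max (g (p.1, p.2 + 1)) (g (p.1 + 1, p.2))) (min (g (p.1, p.2) + 1) (g (p.1 + 1, p.2 + 1)))

lemma mem_leftIcc {h : ℕ × ℕ → ℤ} {i j : ℕ} {x : ℤ} :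
    x ∈ leftIcc h (i, j) ↔
      h (i, j) ≤ x ∧ h (i + 1, j + 1) ≤ x + 1 ∧ x ≤ h (i, j + 1) ∧ x ≤ h (i + 1, j) := by
  simp only [leftIcc, mem_Icc, max_le_iff, le_min_iff, sub_le_iff_le_add, and_assoc]

lemma mem_rightIcc {g : ℕ × ℕ → ℤ} {i j : ℕ} {x : ℤ} :
    x ∈ rightIcc g (i, j) ↔
      g (i, j + 1) ≤ x ∧ g (i + 1, j) ≤ x ∧ x ≤ g (i, j) + 1 ∧ x ≤ g (i + 1, j + 1) := by
  simp only [rightIcc, mem_Icc, max_le_iff, le_min_iff, and_assoc]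

lemma Interlaces.apply_succ_mem_rightIcc {g h : ℕ × ℕ → ℤ} (hgh : Interlaces g h) (i j : ℕ) :
    h (i + 1, j + 1) ∈ rightIcc g (i, j) :=
  mem_rightIcc.2 ⟨(hgh i (j + 1)).2.2.2, (hgh (i + 1) j).2.2.1, (hgh i j).2.1,
    (hgh (i + 1) (j + 1)).1⟩

namespace IsCornerSum

variable {n : ℕ} {g h : ℕ × ℕ → ℤ}

lemma card_leftIcc (hh : IsCornerSum n h) (p : ℕ × ℕ) :
    #(leftIcc h p) = if mixedDiff h p = -1 then 2 else 1 := by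
  have hleft := hh.row_step p.1 p.2
  have hright := hh.row_step p.1 (p.2 + 1)
  have htop := hh.col_step p.1 p.2
  have hbottom := hh.col_step (p.1 + 1) p.2
  rw [leftIcc, Int.card_Icc]
  split_ifs with hentry <;> rw [mixedDiff] at hentry <;> omega

lemma card_rightIcc (hg : IsCornerSum n g) (p : ℕ × ℕ) :
    #(rightIcc g p) = if mixedDiff g p = 1 then 2 else 1 := by
  have hleft := hg.row_step p.1 p.2
  have hright := hg.row_step p.1 (p.2 + 1)
  have htop := hg.col_step p.1 p.2
  have hbottom := hg.col_step (p.1 + 1) p.2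
  rw [rightIcc, Int.card_Icc]
  split_ifs with hentry <;> rw [mixedDiff] at hentry <;> omega

lemma interlaces_of_mem_leftIcc (hh : IsCornerSum (n + 1) h)
    (hboundary : ∀ i j, n < i ∨ n < j → g (i, j) = (min i j : ℕ))
    (hmem : ∀ i j, i ≤ n → j ≤ n → g (i, j) ∈ leftIcc h (i, j)) : Interlaces g h := by
  intro i j
  by_cases hij : i ≤ n ∧ j ≤ n
  · exact mem_leftIcc.1 (hmem i j hij.1 hij.2)
  · rw [hboundary _ _ (by omega), hh.boundary _ _ (by omega), hh.boundary _ _ (by omega),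
      hh.boundary _ _ (by omega), hh.boundary _ _ (by omega)]
    omega

lemma interlaces_of_mem_rightIcc (hg : IsCornerSum n g)
    (hboundary : ∀ i j, i = 0 ∨ j = 0 ∨ n < i ∨ n < j → h (i, j) = (min i j : ℕ))
    (hmem : ∀ i j, i < n → j < n → h (i + 1, j + 1) ∈ rightIcc g (i, j)) : Interlaces g h := by
  simp only [mem_rightIcc] at hmem
  intro i j
  have hgij := hg.boundary i j
  refine ⟨?_, ?_, ?_, ?_⟩
  · have hhij := hboundary i j
    rcases i with _ | i
    · omega
    rcases j with _ | j
    · omega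
    have hbox := hmem i j
    omega
  · have hhij := hboundary (i + 1) (j + 1)
    have hbox := hmem i j
    omega
  · have hhij := hboundary i (j + 1)
    rcases i with _ | i
    · omega
    have hbox := hmem i j
    omega
  · have hhij := hboundary (i + 1) j
    rcases j with _ | j
    · omega
    have hbox := hmem i j
    omega

lemma isCornerSum_and_interlaces_left_iff (hh : IsCornerSum (n + 1) h) :
    IsCornerSum n g ∧ Interlaces g h ↔
      Set.EqOn g (fun p => (min p.1 p.2 : ℕ)) (Set.range (topLeft (n := n + 1)))ᶜ ∧
        ∀ p : Fin (n + 1) × Fin (n + 1), g (topLeft p) ∈ leftIcc h (topLeft p) := by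
  constructor
  · rintro ⟨hg, hgh⟩
    refine ⟨fun ⟨i, j⟩ hij => hg.boundary i j ?_, fun p => mem_leftIcc.2 (hgh p.1 p.2)⟩
    rw [Set.mem_compl_iff, mem_range_topLeft] at hij
    omega
  · rintro ⟨hout, hin⟩
    have hgh : Interlaces g h := hh.interlaces_of_mem_leftIcc
      (fun i j hij => hout (by rw [Set.mem_compl_iff, mem_range_topLeft]; omega))
      (fun i j hi hj => hin (⟨i, by omega⟩, ⟨j, by omega⟩))
    exact ⟨hgh.isCornerSum_left hh, hgh⟩

lemma isCornerSum_and_interlaces_right_iff (hg : IsCornerSum n g) :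
    IsCornerSum (n + 1) h ∧ Interlaces g h ↔
      Set.EqOn h (fun p => (min p.1 p.2 : ℕ)) (Set.range (bottomRight (n := n)))ᶜ ∧
        ∀ p : Fin n × Fin n, h (bottomRight p) ∈ rightIcc g (topLeft p) := by
  constructor
  · rintro ⟨hh, hgh⟩
    refine ⟨fun ⟨i, j⟩ hij => hh.boundary i j ?_, fun p => hgh.apply_succ_mem_rightIcc p.1 p.2⟩
    rw [Set.mem_compl_iff, mem_range_bottomRight] at hij
    omega
  · rintro ⟨hout, hin⟩
    have hboundary (i j : ℕ) (hij : i = 0 ∨ j = 0 ∨ n < i ∨ n < j) : h (i, j) = (min i j : ℕ) :=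
      hout (by rw [Set.mem_compl_iff, mem_range_bottomRight]; omega)
    have hgh : Interlaces g h := hg.interlaces_of_mem_rightIcc hboundary
      (fun i j hi hj => hin (⟨i, hi⟩, ⟨j, hj⟩))
    exact ⟨hgh.isCornerSum_right hboundary, hgh⟩

end IsCornerSum

lemma finite_setOf_isASM (n : ℕ) : {A : Matrix (Fin n) (Fin n) ℤ | IsASM A}.Finite :=
  (Set.Finite.pi' fun _ => Set.Finite.pi' fun _ =>
    Set.toFinite ({-1, 0, 1} : Set ℤ)).subset fun _ hA => hA.1

/-- The finite set of alternating sign matrices of order `n`. -/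
noncomputable def asmFinset (n : ℕ) : Finset (Matrix (Fin n) (Fin n) ℤ) :=
  (finite_setOf_isASM n).toFinset

lemma mem_asmFinset {n : ℕ} {A : Matrix (Fin n) (Fin n) ℤ} : A ∈ asmFinset n ↔ IsASM A :=
  (finite_setOf_isASM n).mem_toFinset

section Counting

variable {n : ℕ}

lemma card_filter_asmFinset (P : (ℕ × ℕ → ℤ) → Prop) [DecidablePred P] :
    #{A ∈ asmFinset n | P (cornerSum A)} = {h | IsCornerSum n h ∧ P h}.ncard := by
  have himage : {h | IsCornerSum n h ∧ P h} =
      cornerSum (n := n) '' ↑{A ∈ asmFinset n | P (cornerSum A)} := by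
    ext h
    simp only [Set.mem_ofPred_eq, Set.mem_image, mem_coe, mem_filter, mem_asmFinset]
    constructor
    · rintro ⟨hh, hP⟩
      obtain ⟨A, hA, rfl⟩ := (bijOn_cornerSum n).surjOn hh
      exact ⟨A, ⟨hA, hP⟩, rfl⟩
    · rintro ⟨A, ⟨hA, hP⟩, rfl⟩
      exact ⟨hA.isCornerSum, hP⟩
  rw [himage, Set.ncard_image_of_injective _ cornerSum_injective, Set.ncard_coe_finset]

open Classical in
lemma card_interlaces_left {B : Matrix (Fin (n + 1)) (Fin (n + 1)) ℤ} (hB : IsASM B) :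
    #{A ∈ asmFinset n | Interlaces (cornerSum A) (cornerSum B)} = 2 ^ Nminus B := by
  rw [card_filter_asmFinset fun g => Interlaces g (cornerSum B)]
  simp only [hB.isCornerSum.isCornerSum_and_interlaces_left_iff]
  rw [ncard_setOf_eqOn_compl_range topLeft_injective]
  simp only [hB.isCornerSum.card_leftIcc, mixedDiff_cornerSum, padded_topLeft, prod_ite,
    prod_const, one_pow, mul_one, Nminus]

open Classical in
lemma card_interlaces_right {A : Matrix (Fin n) (Fin n) ℤ} (hA : IsASM A) :
    #{B ∈ asmFinset (n + 1) | Interlaces (cornerSum A) (cornerSum B)} = 2 ^ Nplus A := by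
  rw [card_filter_asmFinset fun h => Interlaces (cornerSum A) h]
  simp only [hA.isCornerSum.isCornerSum_and_interlaces_right_iff]
  rw [ncard_setOf_eqOn_compl_range bottomRight_injective]
  simp only [hA.isCornerSum.card_rightIcc, mixedDiff_cornerSum, padded_topLeft, prod_ite,
    prod_const, one_pow, mul_one, Nplus]

lemma IsASM.Nplus_eq {A : Matrix (Fin n) (Fin n) ℤ} (hA : IsASM A) : Nplus A = n + Nminus A := by
  have htotal : ∑ p : Fin n × Fin n, A p.1 p.2 = n := by
    simp [Fintype.sum_prod_type, hA.2.1]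
  have hsigned : ∑ p : Fin n × Fin n, A p.1 p.2 = (Nplus A : ℤ) - Nminus A := by
    rw [Nplus, Nminus, card_filter, card_filter]
    push_cast
    rw [← sum_sub_distrib]
    refine sum_congr rfl fun p _ => ?_
    rcases hA.1 p.1 p.2 with h | h | h <;> norm_num [h]
  omega

lemma sum_asmFinset_succ (n : ℕ) :
    ∑ B ∈ asmFinset (n + 1), 2 ^ Nminus B = 2 ^ n * ∑ A ∈ asmFinset n, 2 ^ Nminus A := by
  classical
  calc ∑ B ∈ asmFinset (n + 1), 2 ^ Nminus B
      = ∑ B ∈ asmFinset (n + 1), #{A ∈ asmFinset n | Interlaces (cornerSum A) (cornerSum B)} :=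
        sum_congr rfl fun B hB => (card_interlaces_left (mem_asmFinset.1 hB)).symm
    _ = ∑ A ∈ asmFinset n, #{B ∈ asmFinset (n + 1) | Interlaces (cornerSum A) (cornerSum B)} :=
        (sum_card_bipartiteAbove_eq_sum_card_bipartiteBelow _).symm
    _ = ∑ A ∈ asmFinset n, 2 ^ n * 2 ^ Nminus A :=
        sum_congr rfl fun A hA => by
          have hA := mem_asmFinset.1 hA
          rw [card_interlaces_right hA, hA.Nplus_eq, pow_add]
    _ = 2 ^ n * ∑ A ∈ asmFinset n, 2 ^ Nminus A := (mul_sum _ _ _).symm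

lemma sum_asmFinset_zero : ∑ A ∈ asmFinset 0, 2 ^ Nminus A = 1 := by
  have hsingleton : asmFinset 0 = {0} := by
    ext A
    simp [mem_asmFinset, IsASM, Subsingleton.elim A 0]
  simp [hsingleton, Nminus]

lemma sum_asmFinset (n : ℕ) : ∑ A ∈ asmFinset n, 2 ^ Nminus A = 2 ^ (n * (n - 1) / 2) := by
  induction n with
  | zero => exact sum_asmFinset_zero
  | succ n ih =>
    rw [sum_asmFinset_succ, ih, ← pow_add, ← sum_range_id, ← sum_range_id, sum_range_succ, add_comm]

end Counting

open Classical in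
/-- The sum over all `n×n` alternating sign matrices `A` of `2^{N₋(A)}` equals
`2^{n(n−1)/2}`. -/
theorem sum_two_pow_Nminus (n : ℕ) :
    ∑ᶠ A : Matrix (Fin n) (Fin n) ℤ, (if IsASM A then 2 ^ Nminus A else 0) =
      2 ^ (n * (n - 1) / 2) := by
  rw [← sum_asmFinset, ← finsum_mem_coe_finset]
  simp only [finsum_eq_if, mem_coe, mem_asmFinset]
end

section
/- The sum, over all complete monotone triangles of size n, of (1/2) to the power of the number of entries (above the top row) that also occur in the preceding row, equals 1. -/
/-- A triangular array with rows of lengths `1, 2, …, n` of natural numbers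
(row `i`, `0`-indexed, has `i+1` entries). -/
abbrev Triangle (n : ℕ) := (i : Fin n) → Fin (i.1 + 1) → ℕ

/-- A monotone triangle: each row is strictly increasing from left to right, and
the entries weakly increase along both diagonal directions, i.e. each entry of a
row lies weakly between its below-left and below-right neighbours in the next
row. -/
def IsMonotoneTriangle {n : ℕ} (t : Triangle n) : Prop :=
  (∀ i : Fin n, StrictMono (t i)) ∧
  (∀ (i i' : Fin n) (h : (i : ℕ) + 1 = (i' : ℕ)) (j : Fin (i.1 + 1)),
    t i' ⟨j.1, by omega⟩ ≤ t i j ∧ t i j ≤ t i' ⟨j.1 + 1, by omega⟩)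

/-- A complete monotone triangle of size `n`: a monotone triangle whose bottom
row is `1, 2, …, n`. -/
def IsCompleteMT {n : ℕ} (t : Triangle n) : Prop :=
  IsMonotoneTriangle t ∧
  ∀ (i : Fin n) (hi : (i : ℕ) = n - 1) (j : Fin n), t i ⟨j.1, by omega⟩ = (j : ℕ) + 1

/-- The entry of `t` in row `i` at position `k` does not occur in the preceding
row (entries of the top row are always new). -/
def IsNewEntry {n : ℕ} (t : Triangle n) (i : Fin n) (k : Fin (i.1 + 1)) : Prop :=
  ∀ (i' : Fin n), (i' : ℕ) + 1 = (i : ℕ) → ∀ k' : Fin (i'.1 + 1), t i' k' ≠ t i k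

/-- The number of entries of `t` that do not occur in the preceding row. -/
noncomputable def newCount {n : ℕ} (t : Triangle n) : ℕ :=
  Nat.card {p : (i : Fin n) × Fin (i.1 + 1) // IsNewEntry t p.1 p.2}

/-- The number of entries of `t` (necessarily above the top row) that do occur in
the preceding row. -/
noncomputable def oldCount {n : ℕ} (t : Triangle n) : ℕ :=
  Nat.card {p : (i : Fin n) × Fin (i.1 + 1) // ¬ IsNewEntry t p.1 p.2}

/-! For a monotone bottom row `k`, the weighted count of monotone triangles is the ratio of the
Vandermonde determinants of `k` and of `0, 1, …, n - 1`; for `k = (1, …, n)` it is `1`. The proof is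
by induction on the number of rows. An entry of `k` that reappears in the row `l` above it is an
endpoint of one of the intervals `[k i, k (i + 1)]` in which the entries of `l` vary, so the weights
`1 / 2` turn the sum over `l` into trapezoidal sums. By multilinearity the Vandermonde determinant
is then summed entry by entry. The trapezoidal sum of `x ^ j` is `1 / (j + 1)` times the difference,
between the endpoints, of a monic polynomial of degree `j + 1`, and these differences again have a
Vandermonde determinant, namely that of `k`. Rows `l` that increase only weakly do no harm because
their Vandermonde determinant vanishes. -/

section Trapezoid

open Polynomial

/-- The monic polynomial `Bⱼ(X) + (j / 2) X^(j-1)`, the mean of `Bⱼ(X)` and `Bⱼ(X + 1)` for the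
Bernoulli polynomial `Bⱼ`. For `j > 0` its difference between the ends of an interval is `j` times
the trapezoidal sum of `x^(j-1)`; at `j = 0` the coefficient `j / 2` kills the second term, whose
exponent is truncated there. -/
noncomputable def trapezoidPoly (j : ℕ) : ℚ[X] :=
  Polynomial.bernoulli j + C ((j : ℚ) / 2) * X ^ (j - 1)

theorem natDegree_trapezoidPoly_le (j : ℕ) : (trapezoidPoly j).natDegree ≤ j := by
  refine natDegree_le_iff_coeff_eq_zero.2 fun i hi => ?_
  simp [trapezoidPoly, coeff_bernoulli, coeff_X_pow, hi.not_ge, show i ≠ j - 1 by omega]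

theorem coeff_trapezoidPoly_self (j : ℕ) : (trapezoidPoly j).coeff j = 1 := by
  rcases j with _ | j <;> simp [trapezoidPoly, coeff_bernoulli, coeff_X_pow]

theorem monic_trapezoidPoly (j : ℕ) : (trapezoidPoly j).Monic :=
  monic_of_natDegree_le_of_coeff_eq_one j (natDegree_trapezoidPoly_le j)
    (coeff_trapezoidPoly_self j)

theorem natDegree_trapezoidPoly (j : ℕ) : (trapezoidPoly j).natDegree = j :=
  (natDegree_trapezoidPoly_le j).antisymm <|
    le_natDegree_of_ne_zero (by simp [coeff_trapezoidPoly_self])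

/-- The trapezoidal weight on the interval `[a, b]`: `1 / 2` at the endpoints, `1` elsewhere. -/
def trapezoidWeight {α : Type*} [DecidableEq α] (a b x : α) : ℚ :=
  if x = a ∨ x = b then 1 / 2 else 1

theorem sum_Icc_trapezoidWeight_mul {α : Type*} [PartialOrder α] [LocallyFiniteOrder α]
    [DecidableEq α] {a b : α} (hab : a < b) (f : α → ℚ) :
    ∑ x ∈ Finset.Icc a b, trapezoidWeight a b x * f x
      = ∑ x ∈ Finset.Ico a b, f x + (f b - f a) / 2 := by
  have h_interior : ∑ x ∈ Finset.Ioo a b, trapezoidWeight a b x * f x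
      = ∑ x ∈ Finset.Ioo a b, f x :=
    Finset.sum_congr rfl fun x hx => by
      obtain ⟨hax, hxb⟩ := Finset.mem_Ioo.1 hx
      simp [trapezoidWeight, hax.ne', hxb.ne]
  rw [← Finset.Ico_insert_right hab.le, Finset.sum_insert Finset.right_notMem_Ico,
    ← Finset.Ioo_insert_left hab, Finset.sum_insert Finset.left_notMem_Ioo,
    Finset.sum_insert Finset.left_notMem_Ioo, h_interior]
  simp only [trapezoidWeight, true_or, or_true, if_true]
  ring

theorem succ_mul_sum_Icc_trapezoidWeight_mul_pow {a b : ℕ} (hab : a < b) (j : ℕ) :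
    ((j : ℚ) + 1) * ∑ x ∈ Finset.Icc a b, trapezoidWeight a b x * (x : ℚ) ^ j
      = (trapezoidPoly (j + 1)).eval (b : ℚ) - (trapezoidPoly (j + 1)).eval (a : ℚ) := by
  rw [sum_Icc_trapezoidWeight_mul hab, Finset.sum_Ico_eq_sub _ hab.le, mul_add, mul_sub,
    sum_range_pow_eq_bernoulli_sub, sum_range_pow_eq_bernoulli_sub]
  simp only [trapezoidPoly, eval_add, eval_mul, eval_C, eval_pow, eval_X, Nat.add_sub_cancel,
    Nat.cast_add_one]
  ring

end Trapezoid

section Vandermonde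

open Matrix Polynomial

variable {R : Type*} [CommRing R]

theorem det_vandermonde_succ_eq_det_eval_sub {m : ℕ} (v : Fin (m + 1) → R) (p : ℕ → R[X])
    (h_deg : ∀ j, (p j).natDegree = j) (h_monic : ∀ j, (p j).Monic) :
    (vandermonde v).det = (Matrix.of fun i j : Fin m =>
      (p (j + 1)).eval (v i.succ) - (p (j + 1)).eval (v i.castSucc)).det := by
  have hp_zero : p 0 = 1 := (h_monic 0).natDegree_eq_zero.1 (h_deg 0)
  rw [det_eval_matrixOfPolynomials_eq_det_vandermonde v (fun j => p j) (fun j => h_deg j)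
      (fun j => h_monic j),
    det_eq_of_forall_row_eq_smul_add_pred
      (B := Matrix.of fun i j => Fin.cases ((p j).eval (v 0))
        (fun i => (p j).eval (v i.succ) - (p j).eval (v i.castSucc)) i)
      (fun _ => 1) (by simp) (by simp),
    det_succ_column_zero, Fin.sum_univ_succ]
  simp [hp_zero, submatrix]

theorem det_vandermonde_eq_zero_of_not_injective {n : ℕ} {v : Fin n → R}
    (hv : ¬ Function.Injective v) : (vandermonde v).det = 0 := by
  obtain ⟨i, j, h_eq, h_ne⟩ := Function.not_injective_iff.1 hv
  exact det_zero_of_row_eq h_ne (funext fun p => by simp only [vandermonde_apply, h_eq])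

theorem det_sum_mul_pow {ι : Type*} {m : ℕ} (s : Fin m → Finset ι) (w : Fin m → ι → R)
    (v : ι → R) :
    (Matrix.of fun i j : Fin m => ∑ x ∈ s i, w i x * v x ^ (j : ℕ)).det
      = ∑ l ∈ Fintype.piFinset s, (∏ i, w i (l i)) * (vandermonde (v ∘ l)).det := by
  have h_rows : (Matrix.of fun i j : Fin m => ∑ x ∈ s i, w i x * v x ^ (j : ℕ))
      = fun i => ∑ x ∈ s i, fun j : Fin m => w i x * v x ^ (j : ℕ) := by
    ext i j
    simp only [of_apply, Finset.sum_apply]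
  rw [h_rows]
  refine (detRowAlternating.toMultilinearMap.map_sum_finset _ s).trans
    (Finset.sum_congr rfl fun l _ => ?_)
  rw [← det_mul_column]
  rfl

theorem det_vandermonde_id_succ (m : ℕ) :
    (vandermonde fun i : Fin (m + 1) => (i : R)).det
      = m.factorial * (vandermonde fun i : Fin m => (i : R)).det := by
  cases m with
  | zero => simp
  | succ m =>
    rw [det_vandermonde_id_eq_superFactorial, det_vandermonde_id_eq_superFactorial,
      Nat.superFactorial_succ, Nat.cast_mul]

theorem prod_Ioi_sub_div_sub_eq_det_vandermonde_div {K : Type*} [Field K] {n : ℕ}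
    (v w : Fin n → K) :
    ∏ i, ∏ j ∈ Finset.Ioi i, (v j - v i) / (w j - w i)
      = (vandermonde v).det / (vandermonde w).det := by
  simp only [det_vandermonde, Finset.prod_div_distrib]

theorem prod_Ioi_succ_sub_succ_div_sub (n : ℕ) :
    ∏ i : Fin n, ∏ j ∈ Finset.Ioi i, (((j + 1 : ℕ) : ℚ) - (i + 1 : ℕ)) / (j - i) = 1 := by
  refine Finset.prod_eq_one fun i _ => Finset.prod_eq_one fun j hj => ?_
  have h_ne : (j : ℚ) - i ≠ 0 :=
    sub_ne_zero.2 (Nat.cast_injective.ne (Fin.val_injective.ne (Finset.mem_Ioi.1 hj).ne'))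
  rw [Nat.cast_add_one, Nat.cast_add_one, add_sub_add_right_eq_sub, div_self h_ne]

end Vandermonde

section InterlacingRows

open Matrix

variable {m : ℕ}

/-- The rows `l` with `k i ≤ l i ≤ k (i + 1)` for all `i`: the rows that may stand above `k` in a
monotone triangle, except that they need not increase strictly. -/
def interlacingRows (k : Fin (m + 1) → ℕ) : Finset (Fin m → ℕ) :=
  Fintype.piFinset fun i => Finset.Icc (k i.castSucc) (k i.succ)

theorem mem_interlacingRows {k : Fin (m + 1) → ℕ} {l : Fin m → ℕ} :
    l ∈ interlacingRows k ↔ ∀ i, k i.castSucc ≤ l i ∧ l i ≤ k i.succ := by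
  simp only [interlacingRows, Fintype.mem_piFinset, Finset.mem_Icc]

theorem monotone_of_mem_interlacingRows {k : Fin (m + 1) → ℕ} {l : Fin m → ℕ}
    (hl : l ∈ interlacingRows k) : Monotone l := by
  rw [mem_interlacingRows] at hl
  cases m with
  | zero => exact Subsingleton.monotone l
  | succ m => exact Fin.monotone_iff_le_succ.2 fun i => (hl i.castSucc).2.trans (hl i.succ).1

theorem mem_range_iff_of_mem_interlacingRows {k : Fin (m + 1) → ℕ} (hk : StrictMono k)
    {l : Fin m → ℕ} (hl : l ∈ interlacingRows k) (i : Fin m) :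
    l i ∈ Set.range k ↔ l i = k i.castSucc ∨ l i = k i.succ := by
  constructor
  · rintro ⟨p, hp⟩
    have hi := mem_interlacingRows.1 hl i
    rw [← hp, hk.le_iff_le, hk.le_iff_le, Fin.le_def, Fin.le_def, Fin.val_castSucc,
      Fin.val_succ] at hi
    rw [← hp, hk.injective.eq_iff, hk.injective.eq_iff, Fin.ext_iff, Fin.ext_iff,
      Fin.val_castSucc, Fin.val_succ]
    omega
  · rintro (h | h) <;> exact ⟨_, h.symm⟩

theorem ncard_range_inter {ι α : Type*} {f : ι → α} (hf : Function.Injective f) (s : Set α) :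
    (Set.range f ∩ s).ncard = {i | f i ∈ s}.ncard := by
  rw [← Set.image_preimage_eq_range_inter, Set.ncard_image_of_injective _ hf, Set.preimage]

theorem half_pow_ncard_range_inter_range {k : Fin (m + 1) → ℕ} (hk : StrictMono k)
    {l : Fin m → ℕ} (hl : l ∈ interlacingRows k) (hl_inj : Function.Injective l) :
    ((1 : ℚ) / 2) ^ (Set.range l ∩ Set.range k).ncard
      = ∏ i, trapezoidWeight (k i.castSucc) (k i.succ) (l i) := by
  classical
  simp only [trapezoidWeight, ← mem_range_iff_of_mem_interlacingRows hk hl]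
  rw [ncard_range_inter hl_inj, Set.ncard_eq_toFinset_card', Set.toFinset_ofPred,
    Finset.prod_ite, Finset.prod_const, Finset.prod_const_one, mul_one]

theorem sum_prod_trapezoidWeight_mul_det_vandermonde {k : Fin (m + 1) → ℕ} (hk : StrictMono k) :
    ∑ l ∈ interlacingRows k, (∏ i, trapezoidWeight (k i.castSucc) (k i.succ) (l i)) *
        (vandermonde fun i => (l i : ℚ)).det
      = (vandermonde fun i => (k i : ℚ)).det / m.factorial := by
  have h_factorial : ∏ j : Fin m, ((j : ℚ) + 1) = m.factorial := by
    rw [← Finset.prod_range_add_one_eq_factorial, Finset.prod_range]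
    push_cast
    rfl
  rw [eq_div_iff (by positivity), mul_comm, ← h_factorial,
    det_vandermonde_succ_eq_det_eval_sub _ trapezoidPoly natDegree_trapezoidPoly
      monic_trapezoidPoly]
  simp only [← succ_mul_sum_Icc_trapezoidWeight_mul_pow (hk Fin.castSucc_lt_succ)]
  refine Eq.trans ?_ (det_mul_row (fun j : Fin m => (j : ℚ) + 1) _).symm
  exact congrArg _ (det_sum_mul_pow _ _ _).symm

theorem sum_half_pow_mul_det_vandermonde {k : Fin (m + 1) → ℕ} (hk : StrictMono k) :
    ∑ l ∈ interlacingRows k, ((1 : ℚ) / 2) ^ (Set.range l ∩ Set.range k).ncard *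
        (vandermonde fun i => (l i : ℚ)).det
      = (vandermonde fun i => (k i : ℚ)).det / m.factorial := by
  rw [← sum_prod_trapezoidWeight_mul_det_vandermonde hk]
  refine Finset.sum_congr rfl fun l hl => ?_
  by_cases hl_inj : Function.Injective l
  · rw [half_pow_ncard_range_inter_range hk hl hl_inj]
  · have h_det : (vandermonde fun i => (l i : ℚ)).det = 0 :=
      det_vandermonde_eq_zero_of_not_injective (mt Function.Injective.of_comp hl_inj)
    rw [h_det, mul_zero, mul_zero]

end InterlacingRows

section BottomRow

/-- The last row of a triangle. It is the empty row when `n = 0`. -/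
def bottomRow {n : ℕ} (t : Triangle n) : Fin n → ℕ :=
  fun j => t ⟨n - 1, Nat.sub_one_lt_of_lt j.isLt⟩ (j.cast (Nat.sub_add_cancel j.pos).symm)

/-- The triangle obtained from `t` by adding `k` as a new bottom row. -/
def snocRow {m : ℕ} (t : Triangle m) (k : Fin (m + 1) → ℕ) : Triangle (m + 1) :=
  Fin.snoc (α := fun i : Fin (m + 1) => Fin (i.1 + 1) → ℕ) t k

variable {m n : ℕ}

theorem snocRow_castSucc (t : Triangle m) (k : Fin (m + 1) → ℕ) (i : Fin m) :
    snocRow t k i.castSucc = t i :=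
  Fin.snoc_castSucc ..

theorem snocRow_last (t : Triangle m) (k : Fin (m + 1) → ℕ) : snocRow t k (Fin.last m) = k :=
  Fin.snoc_last ..

theorem bottomRow_cast (t : Triangle m) {i : Fin m} (hi : (i : ℕ) + 1 = m) (j : Fin (i + 1)) :
    bottomRow t (j.cast hi) = t i j := by
  cases m with
  | zero => exact i.elim0
  | succ m =>
    obtain rfl : i = Fin.last m := Fin.ext (Nat.succ.inj hi)
    rfl

theorem bottomRow_snocRow (t : Triangle m) (k : Fin (m + 1) → ℕ) :
    bottomRow (snocRow t k) = k :=
  snocRow_last t k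

theorem exists_eq_snocRow_bottomRow (t : Triangle (m + 1)) :
    ∃ s : Triangle m, t = snocRow s (bottomRow t) :=
  ⟨fun i => t i.castSucc, (Fin.snoc_init_self t).symm⟩

theorem snocRow_left_injective (k : Fin (m + 1) → ℕ) :
    Function.Injective fun t : Triangle m => snocRow t k :=
  fun _ _ h => (Fin.snoc_injective2 h).1

theorem strictMono_bottomRow {t : Triangle n} (ht : IsMonotoneTriangle t) :
    StrictMono (bottomRow t) :=
  fun i _ hij => ht.1 ⟨n - 1, Nat.sub_one_lt_of_lt i.isLt⟩ hij

theorem isMonotoneTriangle_snocRow_iff {t : Triangle m} {k : Fin (m + 1) → ℕ} :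
    IsMonotoneTriangle (snocRow t k) ↔
      IsMonotoneTriangle t ∧ StrictMono k ∧ bottomRow t ∈ interlacingRows k := by
  rw [mem_interlacingRows]
  constructor
  · rintro ⟨h_strict, h_diag⟩
    refine ⟨⟨fun i => ?_, fun i i' h j => ?_⟩, ?_, fun j => ?_⟩
    · simpa only [snocRow_castSucc] using h_strict i.castSucc
    · simpa only [snocRow_castSucc] using h_diag i.castSucc i'.castSucc h j
    · simpa only [snocRow_last] using h_strict (Fin.last m)
    · have hm : m - 1 + 1 = m := Nat.sub_add_cancel j.pos
      have hj := h_diag (Fin.castSucc ⟨m - 1, by omega⟩) (Fin.last m) hm (j.cast hm.symm)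
      simp only [snocRow_castSucc, snocRow_last] at hj
      exact hj
  · rintro ⟨⟨h_strict, h_diag⟩, hk, h_last⟩
    refine ⟨Fin.forall_fin_succ'.2 ⟨fun i => ?_, ?_⟩, fun i i' h j => ?_⟩
    · simpa only [snocRow_castSucc] using h_strict i
    · simpa only [snocRow_last] using hk
    · obtain ⟨i, rfl⟩ : ∃ i₀ : Fin m, i = i₀.castSucc := ⟨⟨i, by omega⟩, rfl⟩
      induction i' using Fin.lastCases with
      | cast i' => simpa only [snocRow_castSucc] using h_diag i i' h j
      | last =>
        have hi := h_last (j.cast h)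
        rw [bottomRow_cast] at hi
        simp only [snocRow_castSucc, snocRow_last]
        exact hi

theorem isNewEntry_snocRow_castSucc_iff {t : Triangle m} {k : Fin (m + 1) → ℕ} {i : Fin m}
    {j : Fin (i + 1)} : IsNewEntry (snocRow t k) i.castSucc j ↔ IsNewEntry t i j := by
  simp only [IsNewEntry, Fin.forall_fin_succ' (n := m), snocRow_castSucc, Fin.val_last,
    Fin.val_castSucc]
  exact and_iff_left fun hi => by omega

theorem isNewEntry_snocRow_last_iff {t : Triangle m} {k : Fin (m + 1) → ℕ} {j : Fin (m + 1)} :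
    IsNewEntry (snocRow t k) (Fin.last m) j ↔ k j ∉ Set.range (bottomRow t) := by
  simp only [IsNewEntry, Fin.forall_fin_succ' (n := m), snocRow_castSucc, snocRow_last,
    Fin.val_last, Fin.val_castSucc]
  constructor
  · rintro ⟨h_new, -⟩ ⟨p, hp⟩
    exact h_new _ (Nat.sub_add_cancel p.pos) _ hp
  · intro h_new
    exact ⟨fun i hi p hp => h_new ⟨p.cast hi, (bottomRow_cast t hi p).trans hp⟩,
      fun h => by omega⟩

theorem oldCount_eq_sum_ncard (t : Triangle n) :
    oldCount t = ∑ i, {j | ¬ IsNewEntry t i j}.ncard := by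
  let sigmaEquiv : {p : (i : Fin n) × Fin (i.1 + 1) // ¬ IsNewEntry t p.1 p.2} ≃
      (i : Fin n) × {j // ¬ IsNewEntry t i j} :=
    { toFun := fun p => ⟨p.1.1, p.1.2, p.2⟩
      invFun := fun p => ⟨⟨p.1, p.2.1⟩, p.2.2⟩ }
  rw [oldCount, Nat.card_congr sigmaEquiv, Nat.card_sigma]
  rfl

theorem oldCount_snocRow (t : Triangle m) {k : Fin (m + 1) → ℕ} (hk : Function.Injective k) :
    oldCount (snocRow t k) = oldCount t + (Set.range (bottomRow t) ∩ Set.range k).ncard := by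
  rw [oldCount_eq_sum_ncard, oldCount_eq_sum_ncard, Fin.sum_univ_castSucc, Set.inter_comm,
    ncard_range_inter hk]
  simp only [isNewEntry_snocRow_castSucc_iff, isNewEntry_snocRow_last_iff, not_not,
    Fin.val_castSucc]
  rfl

end BottomRow

section MonotoneTriangles

variable {m n : ℕ}

/-- The monotone triangles with bottom row `k`. -/
def monotoneTriangles (k : Fin n → ℕ) : Set (Triangle n) :=
  {t | IsMonotoneTriangle t ∧ bottomRow t = k}

theorem isCompleteMT_iff {t : Triangle n} :
    IsCompleteMT t ↔ t ∈ monotoneTriangles fun j => (j : ℕ) + 1 := by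
  refine and_congr_right fun _ => ⟨fun h => funext fun j => h _ rfl j, fun h i hi j => ?_⟩
  rw [← bottomRow_cast t (by omega : (i : ℕ) + 1 = n) ⟨j, by omega⟩, h]
  rfl

theorem monotoneTriangles_eq_empty {k : Fin n → ℕ} (hk : ¬ StrictMono k) :
    monotoneTriangles k = ∅ :=
  Set.eq_empty_of_forall_notMem fun _ ⟨ht, h_bottom⟩ => hk (h_bottom ▸ strictMono_bottomRow ht)

theorem pairwiseDisjoint_monotoneTriangles (s : Set (Fin n → ℕ)) :
    s.PairwiseDisjoint monotoneTriangles :=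
  fun _ _ _ _ hne => Set.disjoint_left.2 fun _ h h' => hne (h.2.symm.trans h'.2)

theorem monotoneTriangles_zero (k : Fin 0 → ℕ) : monotoneTriangles k = {default} := by
  ext t
  simp [monotoneTriangles, IsMonotoneTriangle, eq_iff_true_of_subsingleton]

theorem monotoneTriangles_succ {k : Fin (m + 1) → ℕ} (hk : StrictMono k) :
    monotoneTriangles k
      = (fun t => snocRow t k) '' ⋃ l ∈ interlacingRows k, monotoneTriangles l := by
  ext t
  simp only [monotoneTriangles, Set.mem_image, Set.mem_iUnion, Set.mem_ofPred_eq, exists_prop]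
  constructor
  · rintro ⟨ht, rfl⟩
    obtain ⟨s, hs⟩ := exists_eq_snocRow_bottomRow t
    rw [hs, isMonotoneTriangle_snocRow_iff] at ht
    exact ⟨s, ⟨bottomRow s, ht.2.2, ht.1, rfl⟩, hs.symm⟩
  · rintro ⟨s, ⟨l, hl, hs, rfl⟩, rfl⟩
    exact ⟨isMonotoneTriangle_snocRow_iff.2 ⟨hs, hk, hl⟩, bottomRow_snocRow s k⟩

theorem finite_monotoneTriangles (k : Fin n → ℕ) : (monotoneTriangles k).Finite := by
  induction n with
  | zero => exact Set.toFinite _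
  | succ m ih =>
    by_cases hk : StrictMono k
    · rw [monotoneTriangles_succ hk]
      exact ((interlacingRows k).finite_toSet.biUnion fun l _ => ih l).image _
    · rw [monotoneTriangles_eq_empty hk]
      exact Set.finite_empty

theorem finsum_pow_oldCount_zero {R : Type*} [Semiring R] (q : R) (k : Fin 0 → ℕ) :
    ∑ᶠ t ∈ monotoneTriangles k, q ^ oldCount t = 1 := by
  rw [monotoneTriangles_zero, finsum_mem_singleton, oldCount_eq_sum_ncard, Fin.sum_univ_zero,
    pow_zero]

theorem finsum_pow_oldCount_succ {R : Type*} [Semiring R] (q : R) {k : Fin (m + 1) → ℕ}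
    (hk : StrictMono k) :
    ∑ᶠ t ∈ monotoneTriangles k, q ^ oldCount t
      = ∑ l ∈ interlacingRows k, q ^ (Set.range l ∩ Set.range k).ncard *
          ∑ᶠ t ∈ monotoneTriangles l, q ^ oldCount t := by
  rw [monotoneTriangles_succ hk, finsum_mem_image (snocRow_left_injective k).injOn]
  refine (finsum_mem_biUnion (pairwiseDisjoint_monotoneTriangles _)
    (interlacingRows k).finite_toSet fun l _ => finite_monotoneTriangles l).trans ?_
  rw [finsum_mem_coe_finset]
  refine Finset.sum_congr rfl fun l _ => ?_
  rw [mul_finsum_mem' _ _ (finite_monotoneTriangles l)]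
  refine finsum_mem_congr rfl fun t ht => ?_
  rw [oldCount_snocRow t hk.injective, ht.2, add_comm, pow_add]

end MonotoneTriangles

open Matrix in
theorem sum_weights_complete_monotone_triangles_general {n : ℕ} {k : Fin n → ℕ}
    (hk : Monotone k) :
    ∑ᶠ t ∈ monotoneTriangles k, ((1 : ℚ) / 2) ^ oldCount t
      = ∏ i, ∏ j ∈ Finset.Ioi i, ((k j : ℚ) - k i) / (j - i) := by
  rw [prod_Ioi_sub_div_sub_eq_det_vandermonde_div]
  induction n with
  | zero => rw [finsum_pow_oldCount_zero, det_isEmpty, det_isEmpty, div_one]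
  | succ m ih =>
    by_cases hk_strict : StrictMono k
    · calc ∑ᶠ t ∈ monotoneTriangles k, ((1 : ℚ) / 2) ^ oldCount t
        _ = ∑ l ∈ interlacingRows k, ((1 : ℚ) / 2) ^ (Set.range l ∩ Set.range k).ncard *
              ((vandermonde fun i => (l i : ℚ)).det
                / (vandermonde fun i : Fin m => (i : ℚ)).det) := by
          rw [finsum_pow_oldCount_succ _ hk_strict]
          exact Finset.sum_congr rfl fun l hl => by rw [ih (monotone_of_mem_interlacingRows hl)]
        _ = (vandermonde fun i => (k i : ℚ)).det / m.factorial
              / (vandermonde fun i : Fin m => (i : ℚ)).det := by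
          simp only [← mul_div_assoc, ← Finset.sum_div, sum_half_pow_mul_det_vandermonde hk_strict]
        _ = _ := by rw [det_vandermonde_id_succ, div_div]
    · have h_det : (vandermonde fun i => (k i : ℚ)).det = 0 :=
        det_vandermonde_eq_zero_of_not_injective fun h_inj =>
          hk_strict (hk.strictMono_of_injective h_inj.of_comp)
      rw [monotoneTriangles_eq_empty hk_strict, finsum_mem_empty, h_det, zero_div]

open Classical in
/-- The sum, over all complete monotone triangles of size `n`, of `(1/2)` to the
power of the number of entries (above the top row) that also occur in the
preceding row, equals `1`. -/
theorem sum_weights_complete_monotone_triangles (n : ℕ) :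
    ∑ᶠ t : Triangle n, (if IsCompleteMT t then ((1 : ℚ) / 2) ^ oldCount t else 0) = 1 := by
  calc _ = ∑ᶠ t ∈ monotoneTriangles fun j : Fin n => (j : ℕ) + 1, ((1 : ℚ) / 2) ^ oldCount t := by
        simp only [isCompleteMT_iff, finsum_mem_def, Set.indicator_apply]
    _ = _ := sum_weights_complete_monotone_triangles_general fun _ _ hij => Nat.succ_le_succ hij
    _ = 1 := prod_Ioi_succ_sub_succ_div_sub n
end
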